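/- arXiv:1103.6102 — 2 statements merged into one kernel-verified Lean document; each statement's English description precedes it below -/
import Mathlib

section
/- Let E ⊂ ℝ^{N×n} be a compact set and let U be an open and bounded subset of ℝ^{N×n} containing Rco_f E. Then Rco_f E equals the set of all ξ ∈ ℝ^{N×n} such that for every ε > 0 there exist I ∈ ℕ and pairs (λ_i, ξ_i), i = 1,…,I, with λ_i > 0, Σ_{i=1}^I λ_i = 1, satisfying (H_I(U)), such that ξ = Σ_{i=1}^I λ_i ξ_i and Σ_{i : ξ_i ∉ B_ε(E)} λ_i < ε. -/
open MeasureTheory Filter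

attribute [local instance] Classical.propDecidable
attribute [local instance] Matrix.frobeniusNormedAddCommGroup Matrix.frobeniusNormedSpace

noncomputable section

/-- The space of real `N × n` matrices. -/
abbrev Mat (N n : ℕ) : Type := Matrix (Fin N) (Fin n) ℝ

/-- A function `f : ℝ^{N×n} → ℝ` is rank one convex. -/
def RankOneConvexFun {N n : ℕ} (f : Mat N n → ℝ) : Prop :=
  ∀ lam ∈ Set.Icc (0:ℝ) 1, ∀ ξ η : Mat N n, (ξ - η).rank = 1 →
    f (lam • ξ + (1 - lam) • η) ≤ lam * f ξ + (1 - lam) * f η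

/-- The hull `Rco_f E`. -/
def RcoF {N n : ℕ} (E : Set (Mat N n)) : Set (Mat N n) :=
  {ξ | ∀ f : Mat N n → ℝ, RankOneConvexFun f → (∀ η ∈ E, f η ≤ 0) → f ξ ≤ 0}

/-- A set of matrices is rank one convex. -/
def RankOneConvexSet {N n : ℕ} (S : Set (Mat N n)) : Prop :=
  ∀ A ∈ S, ∀ B ∈ S, (A - B).rank = 1 → ∀ t ∈ Set.Icc (0:ℝ) 1, t • A + (1 - t) • B ∈ S

/-- The property `(H_I(U))`, phrased on lists of (weight, matrix) pairs. -/
inductive HIProp {N n : ℕ} (U : Set (Mat N n)) : List (ℝ × Mat N n) → Prop where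
  | single (l : ℝ) (ξ : Mat N n) (hξ : ξ ∈ U) : HIProp U [(l, ξ)]
  | pair (l₁ l₂ : ℝ) (ξ₁ ξ₂ : Mat N n) (h₁ : ξ₁ ∈ U) (h₂ : ξ₂ ∈ U)
      (hrank : (ξ₁ - ξ₂).rank = 1) : HIProp U [(l₁, ξ₁), (l₂, ξ₂)]
  | step (L rest : List (ℝ × Mat N n)) (l₁ l₂ : ℝ) (ξ₁ ξ₂ : Mat N n)
      (hperm : L.Perm ((l₁, ξ₁) :: (l₂, ξ₂) :: rest)) (hrest : rest ≠ [])
      (h₁ : ξ₁ ∈ U) (h₂ : ξ₂ ∈ U) (hrank : (ξ₁ - ξ₂).rank = 1)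
      (hrec : HIProp U ((l₁ + l₂, ((l₁ + l₂)⁻¹) • (l₁ • ξ₁ + l₂ • ξ₂)) :: rest)) :
      HIProp U L

/-- The family `(λ_i, ξ_i)_{1 ≤ i ≤ I}` satisfies `(H_I(U))`. -/
def SatisfiesH {N n : ℕ} (U : Set (Mat N n)) (I : ℕ) (l : Fin I → ℝ)
    (ξ : Fin I → Mat N n) : Prop :=
  HIProp U (List.ofFn fun i => (l i, ξ i))

/-- The gradient of a map `u : ℝ^n → ℝ^N`, as an `N × n` matrix. -/
def matGrad {N n : ℕ} (u : (Fin n → ℝ) → Fin N → ℝ) (x : Fin n → ℝ) : Mat N n :=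
  LinearMap.toMatrix' (fderiv ℝ u x).toLinearMap

/-- `u` is affine on the set `s`. -/
def AffineOn {N n : ℕ} (u : (Fin n → ℝ) → Fin N → ℝ) (s : Set (Fin n → ℝ)) : Prop :=
  ∃ (A : Mat N n) (b : Fin N → ℝ), ∀ x ∈ s, u x = A.mulVec x + b

/-- `u` is piecewise affine on the open set `Ω`. -/
def PiecewiseAffineOn {N n : ℕ} (u : (Fin n → ℝ) → Fin N → ℝ)
    (Ω : Set (Fin n → ℝ)) : Prop :=
  ContinuousOn u (closure Ω) ∧
  ∃ P : ℕ → Set (Fin n → ℝ),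
    (∀ k, IsOpen (P k)) ∧ (∀ k, P k ⊆ Ω) ∧
    (∀ k l, k ≠ l → Disjoint (P k) (P l)) ∧
    volume (Ω \ ⋃ k, P k) = 0 ∧ ∀ k, AffineOn u (P k)

/-- `u` is piecewise `C¹` on the open set `Ω`. -/
def PiecewiseC1On {N n : ℕ} (u : (Fin n → ℝ) → Fin N → ℝ)
    (Ω : Set (Fin n → ℝ)) : Prop :=
  ContinuousOn u (closure Ω) ∧
  ∃ P : ℕ → Set (Fin n → ℝ),
    (∀ k, IsOpen (P k)) ∧ (∀ k, P k ⊆ Ω) ∧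
    (∀ k l, k ≠ l → Disjoint (P k) (P l)) ∧
    volume (Ω \ ⋃ k, P k) = 0 ∧ ∀ k, ContDiffOn ℝ 1 u (P k)

/-- `u ∈ φ + W₀^{1,∞}(Ω; ℝ^N)`: `u` is Lipschitz on `closure Ω` and agrees with `φ`
on the boundary of `Ω`. -/
def MemW01inf {N n : ℕ} (Ω : Set (Fin n → ℝ)) (φ u : (Fin n → ℝ) → Fin N → ℝ) : Prop :=
  (∃ C : NNReal, LipschitzOnWith C u (closure Ω)) ∧ ∀ x ∈ frontier Ω, u x = φ x

/-- `K` has the relaxation property with respect to `E`. -/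
def HasRelaxationProperty {N n : ℕ} (K E : Set (Mat N n)) : Prop :=
  ∀ Ω : Set (Fin n → ℝ), IsOpen Ω → Bornology.IsBounded Ω →
    ∀ ξ ∈ K, ∀ b : Fin N → ℝ,
      ∃ u : ℕ → (Fin n → ℝ) → Fin N → ℝ,
        (∀ ν, PiecewiseAffineOn (u ν) Ω) ∧
        (∀ ν, MemW01inf Ω (fun x => ξ.mulVec x + b) (u ν)) ∧
        (∀ ν, ∀ᵐ x ∂(volume.restrict Ω), matGrad (u ν) x ∈ E ∪ K) ∧
        (∃ C : NNReal, ∀ ν, LipschitzOnWith C (u ν) (closure Ω)) ∧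
        TendstoUniformlyOn u (fun x => ξ.mulVec x + b) atTop (closure Ω) ∧
        Tendsto (fun ν => ∫ x in Ω, Metric.infDist (matGrad (u ν) x) E) atTop (nhds 0)

/-- The singular values of a square matrix, in nondecreasing order:
the square roots of the eigenvalues of `ξ ξᵀ`, sorted. -/
def singularValues {n : ℕ} (ξ : Matrix (Fin n) (Fin n) ℝ) (i : Fin n) : ℝ :=
  Real.sqrt ((Matrix.isHermitian_mul_conjTranspose_self ξ).eigenvalues
    (Tuple.sort (Matrix.isHermitian_mul_conjTranspose_self ξ).eigenvalues i))

end

theorem joint_cont {X : Type*} [TopologicalSpace X] (f : X → ℝ → ℝ)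
    (h1 : ∀ t, Continuous fun x => f x t)
    (h2 : ∀ x, ConvexOn ℝ Set.univ (f x)) : Continuous fun p : X × ℝ => f p.1 p.2 := by
  rw [continuous_iff_continuousAt]
  rintro ⟨x0, t0⟩
  set g : X × ℝ → ℝ := fun p => max (f p.1 (t0+1)) (f p.1 (t0-1)) with hg
  have hgc : Continuous g := by
    have a := (h1 (t0+1)).comp (continuous_fst (X := X) (Y := ℝ))
    have b := (h1 (t0-1)).comp (continuous_fst (X := X) (Y := ℝ))
    exact a.max b
  have hfc : Continuous (fun p : X × ℝ => f p.1 t0) := (h1 t0).comp continuous_fst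
  set τ : X × ℝ → ℝ := fun p => |p.2 - t0| with hτ
  have hτc : Continuous τ := by fun_prop
  have hup : Continuous fun p => (1 - τ p) * f p.1 t0 + τ p * g p := by fun_prop
  have hlo : Continuous fun p => (1 + τ p) * f p.1 t0 - τ p * g p := by fun_prop
  have up0 := hup.tendsto (x0, t0)
  have lo0 := hlo.tendsto (x0, t0)
  have e : τ (x0, t0) = 0 := by simp [hτ]
  simp only [e, sub_zero, one_mul, zero_mul, add_zero] at up0 lo0
  have hnear : ∀ᶠ p in nhds (x0, t0), τ p < 1 := by
    apply hτc.continuousAt.eventually_lt continuousAt_const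
    rw [e]; norm_num
  refine tendsto_of_tendsto_of_tendsto_of_le_of_le' lo0 up0 ?_ ?_
  · filter_upwards [hnear] with p hp
    have hτ0 : 0 ≤ τ p := abs_nonneg _
    have key : ∀ w, w = g p → ∀ s, s * s = 1 → f p.1 (t0 + s) ≤ w → p.2 = t0 - s * τ p →
        (1 + τ p) * f p.1 t0 - τ p * w ≤ f p.1 p.2 := by
      intro w _ s hs hw hp2
      have := (h2 p.1).2 (Set.mem_univ p.2) (Set.mem_univ (t0 + s))
        (show 0 ≤ 1 / (1 + τ p) by positivity) (show 0 ≤ τ p / (1 + τ p) by positivity)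
        (by field_simp)
      have e1 : (1 / (1 + τ p)) • p.2 + (τ p / (1 + τ p)) • (t0 + s) = t0 := by
        simp only [smul_eq_mul]
        rw [hp2]; field_simp; ring
      rw [e1] at this
      simp only [smul_eq_mul] at this
      have h3 : (1 + τ p) * f p.1 t0 ≤ f p.1 p.2 + τ p * f p.1 (t0+s) := by
        calc _ ≤ (1 + τ p) * _ := mul_le_mul_of_nonneg_left this (by positivity)
          _ = _ := by field_simp
      nlinarith
    rcases le_total 0 (p.2 - t0) with h | h
    · refine key _ rfl (-1) (by norm_num) (le_max_right _ _) ?_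
      simp only [hτ, abs_of_nonneg h]; ring
    · refine key _ rfl 1 (by norm_num) (le_max_left _ _) ?_
      simp only [hτ, abs_of_nonpos h]; ring
  · filter_upwards [hnear] with p hp
    have hτ0 : 0 ≤ τ p := abs_nonneg _
    have key : ∀ s, f p.1 (t0 + s) ≤ g p → p.2 = t0 + s * τ p →
        f p.1 p.2 ≤ (1 - τ p) * f p.1 t0 + τ p * g p := by
      intro s hw hp2
      have := (h2 p.1).2 (Set.mem_univ t0) (Set.mem_univ (t0 + s))
        (show 0 ≤ 1 - τ p by linarith) hτ0 (by ring)
      have e1 : (1 - τ p) • t0 + (τ p) • (t0 + s) = p.2 := by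
        simp only [smul_eq_mul]
        rw [hp2]; ring
      rw [e1] at this
      simp only [smul_eq_mul] at this
      nlinarith
    rcases le_total 0 (p.2 - t0) with h | h
    · refine key 1 (le_max_left _ _) ?_
      simp only [hτ, abs_of_nonneg h]; ring
    · refine key (-1) (le_max_right _ _) ?_
      simp only [hτ, abs_of_nonpos h]; ring

theorem sepconv_cont {ι : Type*} [Fintype ι] [DecidableEq ι] (f : (ι → ℝ) → ℝ)
    (h : ∀ a i, ConvexOn ℝ Set.univ fun t => f (Function.update a i t)) : Continuous f := by
  have key : ∀ s : Finset ι, ∀ a, Continuous fun y : ι → ℝ => f (s.piecewise y a) := by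
    intro s
    induction s using Finset.induction_on with
    | empty => intro a; simpa using continuous_const
    | insert i s hi ih =>
      intro a
      have := joint_cont (fun (y : ι → ℝ) t => f (s.piecewise y (Function.update a i t)))
        (fun t => ih _) (fun y => by
          have := h (s.piecewise y a) i
          have e : ∀ t, Function.update (s.piecewise y a) i t
            = s.piecewise y (Function.update a i t) := by
            intro t
            exact Finset.update_piecewise_of_notMem (π := fun _ => ℝ) s y a hi t
          simpa only [e] using this)
      have h2 := this.comp (Continuous.prodMk continuous_id (continuous_apply i))
      convert h2 using 2 with y
      simp only [Function.comp, id]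
      congr 1
      ext j
      by_cases hj : j = i
      · subst hj; simp [Finset.piecewise, hi]
      · by_cases hjs : j ∈ s <;> simp [Finset.piecewise, hj, hjs]
  simpa using key Finset.univ 0

theorem rank_one_single {N n : ℕ} (i : Fin N) (j : Fin n) (c : ℝ) (hc : c ≠ 0) :
    (Matrix.single i j c : Mat N n).rank = 1 := by
  apply le_antisymm
  · have : (Matrix.single i j c : Mat N n) = Matrix.vecMulVec (Pi.single i c) (Pi.single j 1) := by
      ext a b
      simp [Matrix.single_apply, Matrix.vecMulVec_apply, Pi.single_apply]
      grind
    rw [this]; exact Matrix.rank_vecMulVec_le _ _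
  · rw [Nat.one_le_iff_ne_zero]
    intro h
    have h0 : (Matrix.single i j c : Mat N n) = 0 := by
      rw [Matrix.rank, Submodule.finrank_eq_zero, LinearMap.range_eq_bot] at h
      ext a b
      have := congrFun (LinearMap.congr_fun h (Pi.single b 1)) a
      simpa using this
    have := congrFun (congrFun h0 i) j
    simp at this
    exact hc this

theorem RankOneConvexFun.cont {N n : ℕ} {f : Mat N n → ℝ} (hf : RankOneConvexFun f) :
    Continuous f := by
  have := sepconv_cont (ι := Fin N × Fin n) (fun a => f (Matrix.of fun i j => a (i,j))) (by
    rintro a ⟨i, j⟩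
    refine ⟨convex_univ, ?_⟩
    intro x _ y _ s t hs ht hst
    have ht' : t = 1 - s := by linarith
    subst ht'
    by_cases hxy : x = y
    · subst hxy
      have : s • x + (1 - s) • x = x := by simp only [smul_eq_mul]; ring
      simp only [this]
      simp only [smul_eq_mul]; apply le_of_eq; ring
    have := hf s ⟨hs, by linarith⟩ (Matrix.of fun i' j' => Function.update a (i,j) x (i',j'))
      (Matrix.of fun i' j' => Function.update a (i,j) y (i',j')) (by
        convert rank_one_single i j (x - y) (sub_ne_zero.2 hxy) using 2
        ext i' j'
        simp [Matrix.single_apply, Function.update_apply]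
        grind)
    simp only [smul_eq_mul]
    refine le_trans (le_of_eq ?_) this
    congr 1
    ext i' j'
    simp [Function.update_apply]
    split_ifs
    · rfl
    · ring)
  have h2 : Continuous fun A : Mat N n => fun p : Fin N × Fin n => A p.1 p.2 := by
    fun_prop
  exact this.comp h2

noncomputable def wS {N n : ℕ} (L : List (ℝ × Mat N n)) : ℝ := (L.map Prod.fst).sum
noncomputable def wB {N n : ℕ} (L : List (ℝ × Mat N n)) : Mat N n :=
  (L.map fun p => p.1 • p.2).sum
noncomputable def wC {N n : ℕ} (φ : Mat N n → ℝ) (L : List (ℝ × Mat N n)) : ℝ :=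
  (L.map fun p => p.1 * φ p.2).sum
noncomputable def wsc {N n : ℕ} (c : ℝ) (L : List (ℝ × Mat N n)) : List (ℝ × Mat N n) :=
  L.map fun p => (c * p.1, p.2)

section lists
variable {N n : ℕ} {U : Set (Mat N n)}

@[simp] theorem wS_cons (p : ℝ × Mat N n) (L) : wS (p :: L) = p.1 + wS L := by simp [wS]
@[simp] theorem wB_cons (p : ℝ × Mat N n) (L) : wB (p :: L) = p.1 • p.2 + wB L := by simp [wB]
@[simp] theorem wC_cons (φ : Mat N n → ℝ) (p : ℝ × Mat N n) (L) :
    wC φ (p :: L) = p.1 * φ p.2 + wC φ L := by simp [wC]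
@[simp] theorem wS_nil : wS ([] : List (ℝ × Mat N n)) = 0 := by simp [wS]
@[simp] theorem wB_nil : wB ([] : List (ℝ × Mat N n)) = 0 := by simp [wB]
@[simp] theorem wC_nil (φ : Mat N n → ℝ) : wC φ ([] : List (ℝ × Mat N n)) = 0 := by simp [wC]
@[simp] theorem wsc_nil (c : ℝ) : wsc c ([] : List (ℝ × Mat N n)) = [] := by simp [wsc]
@[simp] theorem wsc_cons (c : ℝ) (p : ℝ × Mat N n) (L) :
    wsc c (p :: L) = (c * p.1, p.2) :: wsc c L := by simp [wsc]
theorem wS_append (L L' : List (ℝ × Mat N n)) : wS (L ++ L') = wS L + wS L' := by simp [wS]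
theorem wB_append (L L' : List (ℝ × Mat N n)) : wB (L ++ L') = wB L + wB L' := by simp [wB]
theorem wC_append (φ : Mat N n → ℝ) (L L' : List (ℝ × Mat N n)) :
    wC φ (L ++ L') = wC φ L + wC φ L' := by simp [wC]
theorem wS_wsc (c : ℝ) (L : List (ℝ × Mat N n)) : wS (wsc c L) = c * wS L := by
  induction L with
  | nil => simp
  | cons p L ih => simp [ih, mul_add]
theorem wB_wsc (c : ℝ) (L : List (ℝ × Mat N n)) : wB (wsc c L) = c • wB L := by
  induction L with
  | nil => simp
  | cons p L ih => simp [ih, smul_smul]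
theorem wC_wsc (φ : Mat N n → ℝ) (c : ℝ) (L : List (ℝ × Mat N n)) :
    wC φ (wsc c L) = c * wC φ L := by
  induction L with
  | nil => simp
  | cons p L ih => simp [ih, mul_add, mul_assoc]
theorem wS_perm {L L' : List (ℝ × Mat N n)} (h : L.Perm L') : wS L = wS L' :=
  (h.map _).sum_eq
theorem wB_perm {L L' : List (ℝ × Mat N n)} (h : L.Perm L') : wB L = wB L' :=
  (h.map _).sum_eq
theorem wC_perm (φ : Mat N n → ℝ) {L L' : List (ℝ × Mat N n)} (h : L.Perm L') :
    wC φ L = wC φ L' := (h.map _).sum_eq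

theorem rank_symm {A B : Mat N n} (h : (A - B).rank = 1) : (B - A).rank = 1 := by
  have := Matrix.rank_smul_of_mem_nonZeroDivisors (A - B)
    (c := (-1 : ℝ)) (mem_nonZeroDivisors_of_ne_zero (by norm_num))
  rw [h] at this
  rw [← this]; congr 1; simp

theorem HIProp.perm {L L' : List (ℝ × Mat N n)} (h : HIProp U L) (hp : L'.Perm L) :
    HIProp U L' := by
  cases h with
  | single l ξ hξ =>
    rw [List.perm_singleton] at hp; subst hp; exact .single _ _ hξ
  | pair l₁ l₂ ξ₁ ξ₂ h₁ h₂ hr =>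
    rcases List.perm_pair.1 hp with rfl | rfl
    · exact .pair _ _ _ _ h₁ h₂ hr
    · exact .pair _ _ _ _ h₂ h₁ (rank_symm hr)
  | step _ rest l₁ l₂ ξ₁ ξ₂ hperm hrest h₁ h₂ hr hrec =>
    exact .step _ rest l₁ l₂ ξ₁ ξ₂ (hp.trans hperm) hrest h₁ h₂ hr hrec

theorem HIProp.mem {L : List (ℝ × Mat N n)} (h : HIProp U L) : ∀ p ∈ L, p.2 ∈ U := by
  induction h with
  | single l ξ hξ => simpa using hξ
  | pair l₁ l₂ ξ₁ ξ₂ h₁ h₂ hr => simp [h₁, h₂]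
  | step L rest l₁ l₂ ξ₁ ξ₂ hperm hrest h₁ h₂ hr hrec ih =>
    intro p hp
    have := hperm.mem_iff.1 hp
    simp only [List.mem_cons] at this
    rcases this with rfl | rfl | h
    · exact h₁
    · exact h₂
    · exact ih p (List.mem_cons_of_mem _ h)

theorem HIProp.ne_nil {L : List (ℝ × Mat N n)} (h : HIProp U L) : L ≠ [] := by
  rintro rfl
  cases h with
  | step L rest l₁ l₂ ξ₁ ξ₂ hperm hrest h₁ h₂ hr hrec =>
    simpa using hperm.length_eq

theorem bary_scale (l₁ l₂ : ℝ) (ξ₁ ξ₂ : Mat N n) {c : ℝ} (hc : c ≠ 0) :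
    (c * l₁ + c * l₂)⁻¹ • ((c * l₁) • ξ₁ + (c * l₂) • ξ₂)
      = (l₁ + l₂)⁻¹ • (l₁ • ξ₁ + l₂ • ξ₂) := by
  rw [← mul_add, mul_smul, mul_smul, ← smul_add, smul_smul]
  congr 1
  rw [mul_inv]; field_simp

theorem HIProp.graft {L : List (ℝ × Mat N n)} (h : HIProp U L) (hpos : ∀ p ∈ L, 0 < p.1)
    {c : ℝ} (hc : 0 < c) {R : List (ℝ × Mat N n)} (hR : R ≠ [])
    (hX : HIProp U ((c * wS L, (wS L)⁻¹ • wB L) :: R)) : HIProp U (wsc c L ++ R) := by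
  induction h with
  | single l ξ hξ =>
    have : 0 < l := hpos (l, ξ) (by simp)
    simpa [smul_smul, this.ne'] using hX
  | pair l₁ l₂ ξ₁ ξ₂ h₁ h₂ hr =>
    have p1 : 0 < l₁ := hpos (l₁, ξ₁) (by simp)
    have p2 : 0 < l₂ := hpos (l₂, ξ₂) (by simp)
    refine .step _ R (c * l₁) (c * l₂) ξ₁ ξ₂ (by simp) hR h₁ h₂ hr ?_
    convert hX using 3
    · simp [mul_add]
    · simpa using bary_scale l₁ l₂ ξ₁ ξ₂ hc.ne'
  | step L rest l₁ l₂ ξ₁ ξ₂ hperm hrest h₁ h₂ hr hrec ih =>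
    have p1 : 0 < l₁ := hpos (l₁, ξ₁) (hperm.mem_iff.2 (by simp))
    have p2 : 0 < l₂ := hpos (l₂, ξ₂) (hperm.mem_iff.2 (by simp))
    have p3 : l₁ + l₂ ≠ 0 := by positivity
    have key := ih (by
      intro p hp
      simp only [List.mem_cons] at hp
      rcases hp with rfl | hp
      · exact add_pos p1 p2
      · exact hpos _ (hperm.mem_iff.2 (by simp [hp]))) (by
      convert hX using 4
      · rw [wS_perm hperm]; simp; ring
      · rw [wS_perm hperm]; simp; ring
      · rw [wB_perm hperm]; simp [smul_smul, p3, add_assoc])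
    refine .step _ (wsc c rest ++ R) (c * l₁) (c * l₂) ξ₁ ξ₂ ?_ (by simp [hR]) h₁ h₂ hr ?_
    · have : (wsc c L).Perm (wsc c ((l₁, ξ₁) :: (l₂, ξ₂) :: rest)) := hperm.map _
      simpa using this.append_right R
    · convert key using 1
      simp only [wsc_cons, List.cons_append]
      congr 2
      · ring
      · simpa using bary_scale l₁ l₂ ξ₁ ξ₂ hc.ne'

theorem HIProp.jensen {f : Mat N n → ℝ} (hf : RankOneConvexFun f)
    {L : List (ℝ × Mat N n)} (h : HIProp U L) (hpos : ∀ p ∈ L, 0 < p.1) :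
    wS L * f ((wS L)⁻¹ • wB L) ≤ wC f L := by
  have two : ∀ (l₁ l₂ : ℝ) (ξ₁ ξ₂ : Mat N n), 0 < l₁ → 0 < l₂ → (ξ₁ - ξ₂).rank = 1 →
      (l₁ + l₂) * f ((l₁ + l₂)⁻¹ • (l₁ • ξ₁ + l₂ • ξ₂)) ≤ l₁ * f ξ₁ + l₂ * f ξ₂ := by
    intro l₁ l₂ ξ₁ ξ₂ p1 p2 hr
    have := hf (l₁ / (l₁ + l₂)) ⟨by positivity, by rw [div_le_one (by positivity)]; linarith⟩
      ξ₁ ξ₂ hr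
    have e : 1 - l₁ / (l₁ + l₂) = l₂ / (l₁ + l₂) := by field_simp; ring
    rw [e] at this
    rw [smul_add, smul_smul, smul_smul, inv_mul_eq_div, inv_mul_eq_div]
    calc _ ≤ (l₁ + l₂) * _ := mul_le_mul_of_nonneg_left this (by positivity)
      _ = _ := by field_simp
  induction h with
  | single l ξ hξ =>
    have : 0 < l := hpos (l, ξ) (by simp)
    simp [smul_smul, this.ne']
  | pair l₁ l₂ ξ₁ ξ₂ h₁ h₂ hr =>
    have p1 : 0 < l₁ := hpos (l₁, ξ₁) (by simp)
    have p2 : 0 < l₂ := hpos (l₂, ξ₂) (by simp)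
    simpa using two l₁ l₂ ξ₁ ξ₂ p1 p2 hr
  | step L rest l₁ l₂ ξ₁ ξ₂ hperm hrest h₁ h₂ hr hrec ih =>
    have p1 : 0 < l₁ := hpos (l₁, ξ₁) (hperm.mem_iff.2 (by simp))
    have p2 : 0 < l₂ := hpos (l₂, ξ₂) (hperm.mem_iff.2 (by simp))
    have p3 : l₁ + l₂ ≠ 0 := by positivity
    have key := ih (by
      intro p hp
      simp only [List.mem_cons] at hp
      rcases hp with rfl | hp
      · exact add_pos p1 p2
      · exact hpos _ (hperm.mem_iff.2 (by simp [hp])))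
    rw [wS_perm hperm, wB_perm hperm, wC_perm f hperm]
    simp only [wS_cons, wB_cons, wC_cons, smul_smul, mul_inv_cancel₀ p3, one_smul, add_assoc] at key ⊢
    have := two l₁ l₂ ξ₁ ξ₂ p1 p2 hr
    linarith

/-- decompositions of `x` in list form -/
def Dec (U : Set (Mat N n)) (x : Mat N n) (L : List (ℝ × Mat N n)) : Prop :=
  HIProp U L ∧ (∀ p ∈ L, 0 < p.1) ∧ wS L = 1 ∧ wB L = x

theorem Dec.combine {p q : Mat N n} {L L' : List (ℝ × Mat N n)} (h : Dec U p L) (h' : Dec U q L')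
    (hp : p ∈ U) (hq : q ∈ U) (hr : (p - q).rank = 1) {t : ℝ} (ht : 0 < t) (ht1 : t < 1) :
    Dec U (t • p + (1 - t) • q) (wsc t L ++ wsc (1 - t) L') := by
  obtain ⟨a1, a2, a3, a4⟩ := h
  obtain ⟨b1, b2, b3, b4⟩ := h'
  have ht2 : 0 < 1 - t := by linarith
  refine ⟨?_, ?_, ?_, ?_⟩
  · apply a1.graft a2 ht
    · simpa [wsc] using b1.ne_nil
    rw [a3, a4]
    have : HIProp U (wsc (1 - t) L' ++ [(t, p)]) := by
      apply b1.graft b2 ht2 (by simp)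
      rw [b3, b4]
      simpa using HIProp.pair _ _ _ _ hq hp (rank_symm hr)
    refine this.perm ?_
    simpa using (List.perm_append_comm (l₁ := [(t, p)]) (l₂ := wsc (1 - t) L'))
  · intro r hr
    simp only [wsc, List.mem_append, List.mem_map] at hr
    rcases hr with ⟨s, hs, rfl⟩ | ⟨s, hs, rfl⟩
    · exact mul_pos ht (a2 _ hs)
    · exact mul_pos ht2 (b2 _ hs)
  · rw [wS_append, wS_wsc, wS_wsc, a3, b3]; ring
  · rw [wB_append, wB_wsc, wB_wsc, a4, b4]

theorem wC_nonneg {φ : Mat N n → ℝ} (hφ : ∀ x, 0 ≤ φ x) {L : List (ℝ × Mat N n)}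
    (h : ∀ p ∈ L, 0 < p.1) : 0 ≤ wC φ L := by
  apply List.sum_nonneg
  intro x hx
  obtain ⟨p, hp, rfl⟩ := List.mem_map.1 hx
  exact mul_nonneg (h p hp).le (hφ _)

noncomputable def gF (U : Set (Mat N n)) (φ : Mat N n → ℝ) (x : Mat N n) : ℝ :=
  sInf {v | ∃ L, Dec U x L ∧ v = wC φ L}

theorem gF_bdd {φ : Mat N n → ℝ} (hφ : ∀ x, 0 ≤ φ x) (x : Mat N n) :
    BddBelow {v | ∃ L, Dec U x L ∧ v = wC φ L} := by
  refine ⟨0, ?_⟩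
  rintro v ⟨L, hL, rfl⟩
  exact wC_nonneg hφ hL.2.1

theorem dec_single {x : Mat N n} (hx : x ∈ U) : Dec U x [(1, x)] :=
  ⟨.single _ _ hx, by simp, by simp, by simp⟩

theorem gF_le {φ : Mat N n → ℝ} (hφ : ∀ x, 0 ≤ φ x) {x : Mat N n} (hx : x ∈ U) :
    gF U φ x ≤ φ x :=
  csInf_le (gF_bdd hφ x) ⟨_, dec_single hx, by simp⟩

theorem gF_lt {φ : Mat N n → ℝ} {x : Mat N n} (hx : x ∈ U) {δ : ℝ} (hδ : gF U φ x < δ) :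
    ∃ L, Dec U x L ∧ wC φ L < δ := by
  obtain ⟨v, ⟨L, hL, rfl⟩, hv⟩ := exists_lt_of_csInf_lt
    (⟨_, _, dec_single hx, rfl⟩ : {v | ∃ L, Dec U x L ∧ v = wC φ L}.Nonempty) hδ
  exact ⟨L, hL, hv⟩

theorem gF_convex {φ : Mat N n → ℝ} (hφ : ∀ x, 0 ≤ φ x) {p q : Mat N n} (hp : p ∈ U) (hq : q ∈ U)
    (hr : (p - q).rank = 1) {t : ℝ} (ht : 0 < t) (ht1 : t < 1) :
    gF U φ (t • p + (1 - t) • q) ≤ t * gF U φ p + (1 - t) * gF U φ q := by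
  apply le_of_forall_pos_lt_add
  intro δ hδ
  obtain ⟨L, hL, h1⟩ := gF_lt hp (lt_add_of_pos_right (gF U φ p) hδ)
  obtain ⟨L', hL', h2⟩ := gF_lt hq (lt_add_of_pos_right (gF U φ q) hδ)
  have : gF U φ (t • p + (1 - t) • q) ≤ wC φ (wsc t L ++ wsc (1 - t) L') :=
    csInf_le (gF_bdd hφ _) ⟨_, hL.combine hL' hp hq hr ht ht1, rfl⟩
  rw [wC_append, wC_wsc, wC_wsc] at this
  refine this.trans_lt ?_
  have h3 : t * wC φ L < t * (gF U φ p + δ) := by gcongr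
  have h4 : (1 - t) * wC φ L' < (1 - t) * (gF U φ q + δ) := by
    have : 0 < 1 - t := by linarith
    gcongr
  linarith

end lists

section main
variable {N n : ℕ} {U : Set (Mat N n)}

theorem RankOneConvexFun.maxx {f g : Mat N n → ℝ} (hf : RankOneConvexFun f)
    (hg : RankOneConvexFun g) : RankOneConvexFun fun x => max (f x) (g x) := by
  intro t ht ξ η hr
  have h0 : 0 ≤ t := ht.1
  have h1 : 0 ≤ 1 - t := by linarith [ht.2]
  apply max_le
  · refine (hf t ht ξ η hr).trans ?_
    gcongr <;> exact le_max_left _ _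
  · refine (hg t ht ξ η hr).trans ?_
    gcongr <;> exact le_max_right _ _

theorem RankOneConvexFun.const_mul {f : Mat N n → ℝ} (hf : RankOneConvexFun f) {A : ℝ}
    (hA : 0 ≤ A) : RankOneConvexFun fun x => A * f x := by
  intro t ht ξ η hr
  have := mul_le_mul_of_nonneg_left (hf t ht ξ η hr) hA
  refine this.trans (le_of_eq ?_); ring

theorem rankOneConvex_const (c : ℝ) : RankOneConvexFun fun _ : Mat N n => c := by
  intro t ht ξ η hr
  apply le_of_eq; ring

theorem exists_barrier {E : Set (Mat N n)} {K : Set (Mat N n)} (hK : IsCompact K)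
    (hKE : ∀ x ∈ K, x ∉ RcoF E) {M : ℝ} (hM : 0 ≤ M) :
    ∃ h : Mat N n → ℝ, RankOneConvexFun h ∧ (∀ x, 0 ≤ h x) ∧ (∀ x ∈ E, h x ≤ 0) ∧
      ∀ x ∈ K, M < h x := by
  refine hK.induction_on (p := fun K => ∃ h : Mat N n → ℝ, RankOneConvexFun h ∧ (∀ x, 0 ≤ h x) ∧
    (∀ x ∈ E, h x ≤ 0) ∧ ∀ x ∈ K, M < h x) ?_ ?_ ?_ ?_
  · exact ⟨fun _ => 0, rankOneConvex_const 0, by simp, by simp, by simp⟩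
  · rintro s t hst ⟨h, h1, h2, h3, h4⟩
    exact ⟨h, h1, h2, h3, fun x hx => h4 x (hst hx)⟩
  · rintro s t ⟨h, h1, h2, h3, h4⟩ ⟨k, k1, k2, k3, k4⟩
    refine ⟨_, h1.maxx k1, fun x => le_max_of_le_left (h2 x),
      fun x hx => max_le (h3 x hx) (k3 x hx), ?_⟩
    rintro x (hx | hx)
    · exact lt_max_of_lt_left (h4 x hx)
    · exact lt_max_of_lt_right (k4 x hx)
  · intro x hx
    have := hKE x hx
    simp only [RcoF, Set.mem_ofPred_eq, not_forall, not_le] at this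
    obtain ⟨f, hf, hfE, hfx⟩ := this
    have hA : 0 ≤ (M + 1) / f x := by positivity
    have hg := (rankOneConvex_const (N := N) (n := n) 0).maxx (hf.const_mul hA)
    refine ⟨_, mem_nhdsWithin_of_mem_nhds ((isOpen_lt continuous_const hg.cont).mem_nhds
      (show M < _ from ?_)), _, hg, ?_, ?_, fun y hy => hy⟩
    · apply lt_max_of_lt_right
      rw [div_mul_cancel₀ _ hfx.ne']; linarith
    · intro y; exact le_max_left _ _
    · intro y hy
      exact max_le le_rfl (mul_nonpos_of_nonneg_of_nonpos hA (hfE y hy))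

theorem glue {φ h : Mat N n → ℝ} {M : ℝ} (hφ : ∀ x, 0 ≤ φ x) (hU : IsOpen U)
    (hM : ∀ x ∈ U, φ x ≤ M) (hh : RankOneConvexFun h) (hfr : ∀ x ∈ frontier U, M < h x) :
    RankOneConvexFun fun x => if x ∈ U then max (gF U φ x) (h x) else h x := by
  set F : Mat N n → ℝ := fun x => if x ∈ U then max (gF U φ x) (h x) else h x with hF
  have hhF : ∀ x, h x ≤ F x := by
    intro x; simp only [hF]; split_ifs
    · exact le_max_right _ _
    · exact le_rfl
  have hgF : ∀ x ∈ U, gF U φ x ≤ F x := by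
    intro x hx; simp only [hF, if_pos hx]; exact le_max_left _ _
  have hFh : ∀ x, M < h x → F x = h x := by
    intro x hx; simp only [hF]; split_ifs with hxU
    · exact max_eq_right (((gF_le hφ hxU).trans (hM x hxU)).trans hx.le)
    · rfl
  intro t ht ξ η hr
  show F _ ≤ t * F ξ + (1 - t) * F η
  set γ : ℝ → Mat N n := fun s => s • ξ + (1 - s) • η with hγ
  have hγc : Continuous γ := by fun_prop
  have hl : ∀ s ∈ Set.Icc (0:ℝ) 1, h (γ s) ≤ s * F ξ + (1 - s) * F η := by
    intro s hs
    refine (hh s hs ξ η hr).trans ?_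
    have h0 : 0 ≤ s := hs.1
    have h1 : 0 ≤ 1 - s := by linarith [hs.2]
    have := hhF ξ
    have := hhF η
    gcongr
  by_cases hc : F (γ t) = h (γ t)
  · exact hc.le.trans (hl t ht)
  have hxU : γ t ∈ U := by
    by_contra hx; apply hc; simp only [hF, if_neg hx]
  have hFg : F (γ t) = gF U φ (γ t) := by
    simp only [hF, if_pos hxU] at hc ⊢
    rcases max_choice (gF U φ (γ t)) (h (γ t)) with h' | h'
    · exact h'
    · exact absurd h' hc
  have key : ∀ e ∈ Set.Icc (0:ℝ) 1, F (γ e) ≤ e * F ξ + (1 - e) * F η →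
      ∃ s ∈ Set.uIcc t e, γ s ∈ U ∧ F (γ s) ≤ s * F ξ + (1 - s) * F η := by
    intro e he hFe
    by_cases heU : γ e ∈ U
    · exact ⟨e, Set.right_mem_uIcc, heU, hFe⟩
    have hpre : IsPreconnected (Set.uIcc t e) := isPreconnected_uIcc
    have hV : IsOpen ({x | M < h x} ∪ (closure U)ᶜ) :=
      (isOpen_lt continuous_const hh.cont).union isClosed_closure.isOpen_compl
    have hout : ∀ x, x ∉ U → x ∈ ({x | M < h x} ∪ (closure U)ᶜ) := by
      intro x hx
      by_cases hxc : x ∈ closure U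
      · left; apply hfr; rw [hU.frontier_eq]; exact ⟨hxc, hx⟩
      · right; exact hxc
    obtain ⟨s, hs, hsU, hsV⟩ := hpre (γ ⁻¹' U) (γ ⁻¹' ({x | M < h x} ∪ (closure U)ᶜ))
      (hU.preimage hγc) (hV.preimage hγc)
      (fun s _ => by
        by_cases hs : γ s ∈ U
        · left; exact hs
        · right; exact hout _ hs)
      ⟨t, Set.left_mem_uIcc, hxU⟩ ⟨e, Set.right_mem_uIcc, hout _ heU⟩
    have hs01 : s ∈ Set.Icc (0:ℝ) 1 := Set.uIcc_subset_Icc ht he hs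
    refine ⟨s, hs, hsU, ?_⟩
    rcases hsV with hsV | hsV
    · rw [hFh _ hsV]; exact hl s hs01
    · exact absurd (subset_closure (show γ s ∈ U from hsU)) hsV
  obtain ⟨a, ha, haU, haF⟩ := key 1 (by simp) (by simp [hγ])
  obtain ⟨b, hb, hbU, hbF⟩ := key 0 (by simp) (by simp [hγ])
  rw [Set.uIcc_of_le ht.2] at ha
  rw [Set.uIcc_of_ge ht.1] at hb
  show F (γ t) ≤ _
  rcases eq_or_lt_of_le ha.1 with rfl | hta
  · exact haF
  rcases eq_or_lt_of_le hb.2 with rfl | hbt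
  · exact hbF
  have hab : 0 < a - b := by linarith
  have hrank : (γ a - γ b).rank = 1 := by
    have : γ a - γ b = (a - b) • (ξ - η) := by
      simp only [hγ]; module
    rw [this, Matrix.rank_smul_of_mem_nonZeroDivisors _ (mem_nonZeroDivisors_of_ne_zero hab.ne')]
    exact hr
  set r : ℝ := (t - b) / (a - b) with hr'
  have hr0 : 0 < r := div_pos (by linarith) hab
  have hr1 : r < 1 := by rw [hr', div_lt_one hab]; linarith
  have htr : t = r * a + (1 - r) * b := by rw [hr']; field_simp; ring
  have hx : γ t = r • γ a + (1 - r) • γ b := by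
    rw [htr]; simp only [hγ]; module
  have := gF_convex hφ haU hbU hrank hr0 hr1
  rw [hFg, hx]
  have hr2 : 0 ≤ 1 - r := by linarith
  calc _ ≤ _ := this
    _ ≤ r * (a * F ξ + (1 - a) * F η) + (1 - r) * (b * F ξ + (1 - b) * F η) := by
      have := (hgF _ haU).trans haF
      have := (hgF _ hbU).trans hbF
      gcongr
    _ = t * F ξ + (1 - t) * F η := by rw [htr]; ring

theorem RcoF_empty : RcoF (∅ : Set (Mat N n)) = ∅ := by
  ext ξ
  simp only [Set.mem_empty_iff_false, iff_false]
  intro h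
  have := h (fun _ => 1) (rankOneConvex_const 1) (by simp)
  norm_num at this

theorem hard {E : Set (Mat N n)} (hU : IsOpen U) (hUbd : Bornology.IsBounded U)
    (hRU : RcoF E ⊆ U) {ξ : Mat N n} (hξ : ξ ∈ RcoF E) {δ : ℝ} (hδ : 0 < δ) :
    ∃ L, Dec U ξ L ∧ wC (fun x => Metric.infDist x E) L < δ := by
  set φ : Mat N n → ℝ := fun x => Metric.infDist x E
  have hφ : ∀ x, 0 ≤ φ x := fun x => Metric.infDist_nonneg
  have hcl : IsCompact (closure U) := hUbd.isCompact_closure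
  have hφc : Continuous φ := Metric.continuous_infDist_pt E
  obtain ⟨M, hM⟩ := hcl.bddAbove_image hφc.continuousOn
  have hM' : ∀ x ∈ U, φ x ≤ M := fun x hx => hM ⟨x, subset_closure hx, rfl⟩
  have hM0 : 0 ≤ M := (hφ ξ).trans (hM' ξ (hRU hξ))
  have hfr : IsCompact (frontier U) := hcl.of_isClosed_subset isClosed_frontier
    frontier_subset_closure
  obtain ⟨h, h1, h2, h3, h4⟩ := exists_barrier (E := E) hfr (fun x hx hxE => by
    rw [hU.frontier_eq] at hx; exact hx.2 (hRU hxE)) hM0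
  have hF := hξ _ (glue hφ hU hM' h1 h4) (by
    intro η hη
    have : gF U φ η ≤ 0 ∨ η ∉ U := by
      by_cases hηU : η ∈ U
      · left
        have := gF_le hφ hηU
        simpa [φ, Metric.infDist_zero_of_mem hη] using this
      · right; exact hηU
    split_ifs with hηU
    · exact max_le (this.resolve_right (by simpa using hηU)) (h3 η hη)
    · exact h3 η hη)
  rw [if_pos (hRU hξ)] at hF
  exact gF_lt (hRU hξ) (((le_max_left _ _).trans hF).trans_lt hδ)

end main

section Statements

open Metric Set

theorem stmt0 {N n : ℕ} (E : Set (Mat N n)) (hE : IsCompact E)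
    (U : Set (Mat N n)) (hUopen : IsOpen U) (hUbd : Bornology.IsBounded U)
    (hRU : RcoF E ⊆ U) :
    RcoF E = {ξ : Mat N n | ∀ ε > 0, ∃ (I : ℕ) (l : Fin I → ℝ) (ξs : Fin I → Mat N n),
      (∀ i, 0 < l i) ∧ ∑ i, l i = 1 ∧ SatisfiesH U I l ξs ∧
      ξ = ∑ i, l i • ξs i ∧
      ∑ i ∈ Finset.univ.filter (fun i => ξs i ∉ Metric.thickening ε E), l i < ε} := by
  ext ξ
  constructor
  · intro hξ ε hε
    have hEne : E.Nonempty := by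
      rw [Set.nonempty_iff_ne_empty]
      rintro rfl
      rw [RcoF_empty] at hξ
      exact hξ
    obtain ⟨L, ⟨hH, hpos, hS, hB⟩, hC⟩ := hard hUopen hUbd hRU hξ (mul_pos hε hε)
    have hL : (List.ofFn fun i : Fin L.length => ((L.get i).1, (L.get i).2)) = L := by
      simpa using List.ofFn_get L
    refine ⟨L.length, fun i => (L.get i).1, fun i => (L.get i).2, fun i => hpos _ (L.get_mem i),
      ?_, ?_, ?_, ?_⟩
    · rw [← hS, ← List.sum_ofFn]
      conv_rhs => rw [← hL]
      simp only [wS, List.map_ofFn]; rfl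
    · unfold SatisfiesH; rw [hL]; exact hH
    · rw [← hB, ← List.sum_ofFn]
      conv_lhs => rw [← hL]
      simp only [wB, List.map_ofFn]; rfl
    · have hC' : ∑ i : Fin L.length, (L.get i).1 * Metric.infDist (L.get i).2 E < ε * ε := by
        rw [← List.sum_ofFn]
        conv at hC => rw [← hL]
        simp only [wC, List.map_ofFn] at hC
        exact hC
      refine lt_of_mul_lt_mul_left (lt_of_le_of_lt ?_ hC') hε.le
      rw [Finset.mul_sum]
      refine le_trans (Finset.sum_le_sum (g := fun i => (L.get i).1 * Metric.infDist (L.get i).2 E)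
        ?_) (Finset.sum_le_sum_of_subset_of_nonneg (Finset.filter_subset _ _) ?_)
      · intro i hi
        have hi2 := (Finset.mem_filter.1 hi).2
        rw [Metric.mem_thickening_iff_infDist_lt hEne, not_lt] at hi2
        rw [mul_comm]
        exact mul_le_mul_of_nonneg_left hi2 (hpos _ (L.get_mem i)).le
      · intro i _ _
        exact mul_nonneg (hpos _ (L.get_mem i)).le Metric.infDist_nonneg
  · intro hξ f hf hfE
    have hfc := hf.cont
    have hcl : IsCompact (closure U) := hUbd.isCompact_closure
    obtain ⟨M, hM⟩ := hcl.bddAbove_image hfc.continuousOn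
    have hM' : ∀ x ∈ U, f x ≤ |M| :=
      fun x hx => (hM ⟨x, subset_closure hx, rfl⟩).trans (le_abs_self M)
    apply le_of_forall_pos_le_add
    intro δ hδ
    obtain ⟨ε₀, hε₀, hth⟩ := hE.exists_thickening_subset_open
      (isOpen_lt hfc (continuous_const (y := δ / 2))) (fun x hx => by
        have := hfE x hx
        show f x < δ / 2
        linarith)
    have hM0 : 0 < |M| + 1 := by positivity
    obtain ⟨I, l, ξs, hpos, hsum, hH, rfl, hsmall⟩ :=
      hξ (min ε₀ (δ / 2 / (|M| + 1))) (lt_min hε₀ (by positivity))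
    have hJ := HIProp.jensen hf hH (by
      intro p hp
      obtain ⟨i, rfl⟩ := (List.mem_ofFn' _ _).1 hp
      exact hpos i)
    have e1 : wS (List.ofFn fun i => (l i, ξs i)) = 1 := by
      rw [← hsum, ← List.sum_ofFn]; simp only [wS, List.map_ofFn]; rfl
    have e2 : wB (List.ofFn fun i => (l i, ξs i)) = ∑ i, l i • ξs i := by
      rw [← List.sum_ofFn]; simp only [wB, List.map_ofFn]; rfl
    have e3 : wC f (List.ofFn fun i => (l i, ξs i)) = ∑ i, l i * f (ξs i) := by
      rw [← List.sum_ofFn]; simp only [wC, List.map_ofFn]; rfl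
    rw [e1, e2, e3, inv_one, one_smul, one_mul] at hJ
    have hmem : ∀ i, ξs i ∈ U := fun i =>
      HIProp.mem hH (l i, ξs i) ((List.mem_ofFn' _ _).2 ⟨i, rfl⟩)
    set ε := min ε₀ (δ / 2 / (|M| + 1)) with hε
    have hb : ∀ i, l i * f (ξs i) ≤
        l i * (δ / 2) + (if ξs i ∉ Metric.thickening ε E then l i else 0) * |M| := by
      intro i
      have hl := hpos i
      split_ifs with hi
      · have : f (ξs i) < δ / 2 := hth (Metric.thickening_mono (min_le_left _ _) E hi)
        rw [zero_mul, add_zero]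
        exact mul_le_mul_of_nonneg_left this.le hl.le
      · have : f (ξs i) ≤ δ / 2 + |M| := by linarith [hM' _ (hmem i)]
        rw [← mul_add]
        exact mul_le_mul_of_nonneg_left this hl.le
    have hJ2 := hJ.trans (Finset.sum_le_sum fun i _ => hb i)
    rw [Finset.sum_add_distrib, ← Finset.sum_mul, ← Finset.sum_mul, hsum,
      ← Finset.sum_filter] at hJ2
    have hs2 := hsmall.le.trans (min_le_right ε₀ (δ / 2 / (|M| + 1)))
    have h5 := mul_le_mul_of_nonneg_right hs2 (abs_nonneg M)
    have h6 : δ / 2 / (|M| + 1) * |M| ≤ δ / 2 := by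
      rw [div_mul_eq_mul_div, div_le_iff₀ hM0]
      nlinarith [abs_nonneg M]
    linarith

end Statements
end

section
/- Let E, K be two bounded subsets of ℝ^{N×n} and, for each δ > 0, let E_δ, K_δ be sets verifying: (i) for every ε > 0 there exists δ_0 > 0 such that dist(η; E) ≤ ε for all η ∈ E_δ and all δ ∈ (0, δ_0]; (ii) if η ∈ int K then there exists δ_0 > 0 such that η ∈ K_δ for all δ ∈ (0, δ_0]; (iii) for every δ > 0 and every ξ ∈ K_δ there exist I ∈ ℕ and pairs (λ_i, ξ_i), i = 1,…,I, with λ_i > 0, Σ_{i=1}^I λ_i = 1, ξ_i ∈ ℝ^{N×n}, satisfying (H_I(int K)), such that ξ = Σ_{i=1}^I λ_i ξ_i and Σ_{i : ξ_i ∉ E_δ} λ_i < δ. Then int K has the relaxation property with respect to E. -/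
open MeasureTheory Filter

attribute [local instance] Classical.propDecidable
attribute [local instance] Matrix.frobeniusNormedAddCommGroup Matrix.frobeniusNormedSpace

section Helpers

open Metric Set Topology

theorem rank_one_decomp {N n : ℕ} (A : Mat N n) (h : A.rank = 1) :
    ∃ (a : Fin N → ℝ) (e : Fin n → ℝ), e ≠ 0 ∧ A = Matrix.vecMulVec a e := by
  have h' : Module.finrank ℝ (LinearMap.range A.mulVecLin) = 1 := h
  obtain ⟨⟨a, ha⟩, hne, hall⟩ := finrank_eq_one_iff'.1 h'
  have hcol : ∀ j : Fin n, ∃ c : ℝ, c • a = A.mulVec (Pi.single j 1) := by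
    intro j
    obtain ⟨c, hc⟩ := hall ⟨A.mulVec (Pi.single j 1), ⟨Pi.single j 1, rfl⟩⟩
    exact ⟨c, congrArg Subtype.val hc⟩
  choose e he using hcol
  have hA : A = Matrix.vecMulVec a e := by
    ext i j
    have := congrFun (he j) i
    simp [Matrix.vecMulVec_apply] at this ⊢
    linarith
  refine ⟨a, e, ?_, hA⟩
  rintro rfl
  have : A = 0 := by rw [hA]; ext i j; simp [Matrix.vecMulVec_apply]
  rw [this] at h
  simp at h

theorem exists_frontier_segment {n : ℕ} {P : Set (Fin n → ℝ)} {x y : Fin n → ℝ} (hx : x ∈ P)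
    (hy : y ∉ P) : ∃ z ∈ segment ℝ x y, z ∈ frontier P := by
  have hc : IsPreconnected (segment ℝ x y) := (convex_segment x y).isPreconnected
  by_contra hcon
  push Not at hcon
  have h2 := hc.subset_or_subset (u := interior P) (v := (closure P)ᶜ) isOpen_interior
    isClosed_closure.isOpen_compl
    (Set.disjoint_left.2 fun z hz hz' => hz' (subset_closure (interior_subset hz)))
    (by
      intro z hz
      have := hcon z hz
      rw [frontier] at this
      by_cases h : z ∈ closure P
      · left; by_contra h3; exact this ⟨h, h3⟩
      · right; exact h)
  rcases h2 with h2 | h2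
  · exact hy (interior_subset (h2 (right_mem_segment ℝ x y)))
  · exact h2 (left_mem_segment ℝ x y) (subset_closure hx)

theorem glue_s1 {N n : ℕ} {ι : Type*} (M : NNReal) (P : ι → Set (Fin n → ℝ))
    (hP : ∀ i, IsOpen (P i)) (hd : ∀ i j, i ≠ j → Disjoint (P i) (P j))
    (u : (Fin n → ℝ) → Fin N → ℝ) (hu : LipschitzWith M u)
    (w : ι → (Fin n → ℝ) → Fin N → ℝ) (hw : ∀ i, LipschitzWith M (w i))
    (hfr : ∀ i, ∀ x ∈ frontier (P i), w i x = u x) :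
    ∃ v : (Fin n → ℝ) → Fin N → ℝ, LipschitzWith M v ∧ (∀ i, ∀ x ∈ P i, v x = w i x) ∧
      ∀ x, (∀ i, x ∉ P i) → v x = u x := by
  let v : (Fin n → ℝ) → Fin N → ℝ := fun x => if h : ∃ i, x ∈ P i then w h.choose x else u x
  have v1 : ∀ i, ∀ x ∈ P i, v x = w i x := by
    intro i x hx
    have h : ∃ i, x ∈ P i := ⟨i, hx⟩
    have : h.choose = i := by
      by_contra hne
      exact Set.disjoint_left.1 (hd _ _ hne) h.choose_spec hx
    simp only [v, dif_pos h, this]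
  have v2 : ∀ x, (∀ i, x ∉ P i) → v x = u x := by
    intro x hx
    have h : ¬ ∃ i, x ∈ P i := by push Not; exact hx
    simp only [v, dif_neg h]
  have fr : ∀ i, ∀ x ∈ frontier (P i), ∀ j, x ∉ P j := by
    intro i x hx j hj
    by_cases hij : i = j
    · subst hij
      rw [(hP i).frontier_eq] at hx
      exact hx.2 hj
    · have := (hd i j hij).closure_left (hP j)
      exact Set.disjoint_left.1 this hx.1 hj
  have key1 : ∀ i, ∀ x ∈ P i, ∀ z ∈ frontier (P i), dist (v x) (v z) ≤ M * dist x z := by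
    intro i x hx z hz
    rw [v1 i x hx, v2 z (fr i z hz), ← hfr i z hz]
    exact (hw i).dist_le_mul x z
  have key2 : ∀ x y, (∀ i, x ∉ P i) → dist (v x) (v y) ≤ M * dist x y := by
    intro x y hx
    by_cases hy : ∃ j, y ∈ P j
    · obtain ⟨j, hj⟩ := hy
      obtain ⟨z, hz, hzf⟩ := exists_frontier_segment hj (hx j)
      have h1 := key1 j y hj z hzf
      have h2 := hu.dist_le_mul x z
      rw [← v2 x hx, ← v2 z (fr j z hzf)] at h2
      have h3 := dist_add_dist_of_mem_segment hz
      calc dist (v x) (v y) ≤ dist (v x) (v z) + dist (v z) (v y) := dist_triangle _ _ _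
        _ ≤ M * dist x z + M * dist y z := by rw [dist_comm (v z)]; gcongr
        _ = M * dist x y := by rw [dist_comm x y, ← h3, dist_comm x z]; ring
    · push Not at hy
      rw [v2 x hx, v2 y hy]
      exact hu.dist_le_mul x y
  refine ⟨v, LipschitzWith.of_dist_le_mul ?_, v1, v2⟩
  intro x y
  by_cases hx : ∃ i, x ∈ P i
  · obtain ⟨i, hi⟩ := hx
    by_cases hy : y ∈ P i
    · rw [v1 i x hi, v1 i y hy]
      exact (hw i).dist_le_mul x y
    · obtain ⟨z, hz, hzf⟩ := exists_frontier_segment hi hy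
      have h1 := key1 i x hi z hzf
      have h2 := key2 z y (fr i z hzf)
      have h3 := dist_add_dist_of_mem_segment hz
      calc dist (v x) (v y) ≤ dist (v x) (v z) + dist (v z) (v y) := dist_triangle _ _ _
        _ ≤ M * dist x z + M * dist z y := by gcongr
        _ = M * dist x y := by rw [← h3]; ring
  · push Not at hx
    exact key2 x y hx

theorem vol_scaled {n : ℕ} (S : Set (Fin n → ℝ)) (x : Fin n → ℝ) {r : ℝ} (hr : 0 < r) :
    volume {y | r⁻¹ • (y - x) ∈ S} = ENNReal.ofReal (r ^ n) * volume S := by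
  have h1 : {y | r⁻¹ • (y - x) ∈ S} = (fun y => y + -x) ⁻¹' ((fun y => r⁻¹ • y) ⁻¹' S) := by
    ext y; simp [sub_eq_add_neg]
  rw [h1, measure_preimage_add_right, Measure.addHaar_preimage_smul _ (inv_ne_zero hr.ne')]
  simp [abs_of_pos hr]

theorem vitali_cover {n : ℕ} (P : Set (Fin n → ℝ)) (hPo : IsOpen P) (hPc : Convex ℝ P)
    (hPb : Bornology.IsBounded P) (hP0 : (0 : Fin n → ℝ) ∈ P)
    (Ω : Set (Fin n → ℝ)) (hΩ : IsOpen Ω) (ε : ℝ) (hε : 0 < ε) :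
    ∃ t : Set ((Fin n → ℝ) × ℝ), t.Countable ∧ (∀ a ∈ t, 0 < a.2 ∧ a.2 ≤ ε) ∧
      (∀ a ∈ t, {y | a.2⁻¹ • (y - a.1) ∈ P} ⊆ Ω) ∧
      (t.PairwiseDisjoint fun a => {y | a.2⁻¹ • (y - a.1) ∈ P}) ∧
      volume (Ω \ ⋃ a ∈ t, {y | a.2⁻¹ • (y - a.1) ∈ P}) = 0 := by
  obtain ⟨D, hD0, hD⟩ := hPb.closure.subset_closedBall_lt 0 0
  let B : ((Fin n → ℝ) × ℝ) → Set (Fin n → ℝ) := fun a => {y | a.2⁻¹ • (y - a.1) ∈ closure P}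
  let T : Set ((Fin n → ℝ) × ℝ) := {a | 0 < a.2 ∧ a.2 ≤ ε ∧ B a ⊆ Ω}
  have hBb : ∀ a : (Fin n → ℝ) × ℝ, 0 < a.2 → B a ⊆ closedBall a.1 (a.2 * D) := by
    intro a ha y hy
    have := hD hy
    rw [mem_closedBall, dist_eq_norm] at this ⊢
    rw [sub_zero, norm_smul, norm_inv, Real.norm_eq_abs, abs_of_pos ha] at this
    rwa [inv_mul_le_iff₀ ha] at this
  have hBs : ∀ a : (Fin n → ℝ) × ℝ, {y | a.2⁻¹ • (y - a.1) ∈ P} ⊆ B a :=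
    fun a y hy => subset_closure (s := P) hy
  have hPpos : 0 < volume P := hPo.measure_pos volume ⟨0, hP0⟩
  have hPfin : volume P ≠ ⊤ := hPb.measure_lt_top.ne
  have hC : volume (closedBall (0 : Fin n → ℝ) (3 * D)) / volume P ≠ ⊤ :=
    ENNReal.div_ne_top measure_closedBall_lt_top.ne hPpos.ne'
  have hcont : ∀ a : (Fin n → ℝ) × ℝ, Continuous fun y : Fin n → ℝ => a.2⁻¹ • (y - a.1) := by
    intro a; fun_prop
  obtain ⟨t, htT, htc, htd, ht0⟩ := Vitali.exists_disjoint_covering_ae (volume) Ω T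
    (volume (closedBall (0 : Fin n → ℝ) (3 * D)) / volume P).toNNReal
    (fun a => a.2 * D) (fun a => a.1) B (fun a ha => hBb a ha.1)
    (by
      intro a ha
      have e1 : closedBall a.1 (3 * (a.2 * D)) =
          {y | a.2⁻¹ • (y - a.1) ∈ closedBall (0 : Fin n → ℝ) (3 * D)} := by
        ext y
        have ha' : 0 < a.2 := ha.1
        simp only [mem_closedBall, mem_ofPred_eq, dist_eq_norm, sub_zero, norm_smul, norm_inv,
          Real.norm_eq_abs, abs_of_pos ha']
        rw [inv_mul_le_iff₀ ha']
        constructor <;> intro h <;> linarith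
      rw [e1, vol_scaled _ _ ha.1, ENNReal.coe_toNNReal hC, vol_scaled _ _ ha.1]
      calc ENNReal.ofReal (a.2 ^ n) * volume (closedBall (0 : Fin n → ℝ) (3 * D))
          = ENNReal.ofReal (a.2 ^ n) *
            (volume (closedBall (0 : Fin n → ℝ) (3 * D)) / volume P * volume P) := by
              rw [ENNReal.div_mul_cancel hPpos.ne' hPfin]
        _ ≤ ENNReal.ofReal (a.2 ^ n) *
            (volume (closedBall (0 : Fin n → ℝ) (3 * D)) / volume P * volume (closure P)) := by
              gcongr; exact subset_closure
        _ = _ := by ring)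
    (by
      intro a ha
      refine ⟨a.1, ?_⟩
      apply interior_maximal (t := {y | a.2⁻¹ • (y - a.1) ∈ P}) (hBs a)
        (hPo.preimage (hcont a))
      simpa using hP0)
    (fun a ha => isClosed_closure.preimage (hcont a))
    (by
      intro x hx δ hδ
      obtain ⟨ρ, hρ, hρΩ⟩ := Metric.isOpen_iff.1 hΩ x hx
      let r := min ε (min (δ / D) (ρ / (2 * D)))
      have hr : 0 < r := by positivity
      have hr1 : r ≤ ε := min_le_left _ _
      have hr2 : r ≤ δ / D := (min_le_right _ _).trans (min_le_left _ _)
      have hr3 : r ≤ ρ / (2 * D) := (min_le_right _ _).trans (min_le_right _ _)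
      rw [le_div_iff₀ (by positivity)] at hr2 hr3
      refine ⟨(x, r), ⟨hr, hr1, ?_⟩, hr2, rfl⟩
      refine (hBb (x, r) hr).trans ((closedBall_subset_ball ?_).trans hρΩ)
      show r * D < ρ
      linarith)
  refine ⟨t, htc, fun a ha => ⟨(htT ha).1, (htT ha).2.1⟩,
    fun a ha => Subset.trans (hBs a) (htT ha).2.2, ?_, ?_⟩
  · intro a ha b hb hab
    exact (htd ha hb hab).mono (hBs a) (hBs b)
  · have hnull : volume (⋃ a ∈ t, {y | a.2⁻¹ • (y - a.1) ∈ frontier P}) = 0 := by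
      rw [measure_biUnion_null_iff htc]
      intro a ha
      rw [vol_scaled _ _ (htT ha).1, hPc.addHaar_frontier volume, mul_zero]
    refine measure_mono_null ?_ (measure_union_null ht0 hnull)
    rintro y ⟨hy, hy2⟩
    by_cases h : y ∈ ⋃ a ∈ t, B a
    · right
      simp only [mem_iUnion] at h hy2 ⊢
      obtain ⟨a, ha, hya⟩ := h
      refine ⟨a, ha, ?_⟩
      show _ ∈ frontier P
      rw [hPo.frontier_eq]
      exact ⟨hya, fun h => hy2 ⟨a, ha, h⟩⟩
    · left; exact ⟨hy, h⟩

theorem max_slope (a b : ℝ) : ∃ τ : ℝ, 0 ≤ τ ∧ τ ≤ 1 ∧ max a 0 - max b 0 = τ * (a - b) := by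
  by_cases hab : a = b
  · exact ⟨0, le_rfl, zero_le_one, by simp [hab]⟩
  · have h : a - b ≠ 0 := sub_ne_zero.2 hab
    refine ⟨(max a 0 - max b 0) / (a - b), ?_, ?_, by field_simp⟩
    · rcases lt_or_gt_of_ne hab with h1 | h1
      · apply div_nonneg_of_nonpos
        · have := max_le_max h1.le (le_refl (0:ℝ)); linarith
        · linarith
      · apply div_nonneg
        · have := max_le_max h1.le (le_refl (0:ℝ)); linarith
        · linarith
    · rcases lt_or_gt_of_ne hab with h1 | h1
      · rw [div_le_one_of_neg (by linarith)]
        rcases max_cases a 0 with h2 | h2 <;> rcases max_cases b 0 with h3 | h3 <;> linarith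
      · rw [div_le_one (by linarith)]
        rcases max_cases a 0 with h2 | h2 <;> rcases max_cases b 0 with h3 | h3 <;> linarith

/-- The roof-shaped profile. -/
noncomputable def hprof {n : ℕ} (lam δ : ℝ) (e : Fin n → ℝ) (i0 : Fin n) (x : Fin n → ℝ) : ℝ :=
  1 - (max (e ⬝ᵥ x) 0 - (1 - lam) * (e ⬝ᵥ x)) - δ * ∑ i ∈ Finset.univ.erase i0, |x i|

theorem mprof_nonneg {lam s : ℝ} (h0 : 0 < lam) (h1 : lam < 1) :
    0 ≤ max s 0 - (1 - lam) * s := by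
  rcases max_cases s 0 with h2 | h2 <;> rw [h2.1]
  · nlinarith
  · nlinarith

theorem continuous_hprof {n : ℕ} (lam δ : ℝ) (e : Fin n → ℝ) (i0 : Fin n) :
    Continuous (hprof lam δ e i0) := by
  unfold hprof dotProduct
  fun_prop

theorem hprof_slope {n : ℕ} {lam δ : ℝ} (h0 : 0 < lam) (h1 : lam < 1) (hδ : 0 < δ)
    (e : Fin n → ℝ) (i0 : Fin n) (x y : Fin n → ℝ) :
    ∃ θ : ℝ, -(1 - lam) ≤ θ ∧ θ ≤ lam ∧
      |max (hprof lam δ e i0 x) 0 - max (hprof lam δ e i0 y) 0 + θ * (e ⬝ᵥ (x - y))|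
        ≤ δ * n * ‖x - y‖ := by
  obtain ⟨τ, t0, t1, ht⟩ := max_slope (hprof lam δ e i0 x) (hprof lam δ e i0 y)
  obtain ⟨σ, s0, s1, hs⟩ := max_slope (e ⬝ᵥ x) (e ⬝ᵥ y)
  set R := ∑ i ∈ Finset.univ.erase i0, |x i| - ∑ i ∈ Finset.univ.erase i0, |y i| with hR
  have hRb : |R| ≤ n * ‖x - y‖ := by
    rw [hR, ← Finset.sum_sub_distrib]
    calc _ ≤ ∑ i ∈ Finset.univ.erase i0, |(|x i| - |y i|)| := Finset.abs_sum_le_sum_abs _ _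
      _ ≤ ∑ i ∈ Finset.univ.erase i0, ‖x - y‖ := by
        apply Finset.sum_le_sum
        intro i _
        exact (abs_abs_sub_abs_le _ _).trans (norm_le_pi_norm (x - y) i)
      _ ≤ ∑ i : Fin n, ‖x - y‖ := Finset.sum_le_sum_of_subset_of_nonneg (Finset.subset_univ _)
          (fun _ _ _ => norm_nonneg _)
      _ = n * ‖x - y‖ := by simp
  refine ⟨τ * (σ - (1 - lam)), ?_, ?_, ?_⟩
  · nlinarith
  · nlinarith
  · have e1 : hprof lam δ e i0 x - hprof lam δ e i0 y
        = -(σ - (1 - lam)) * (e ⬝ᵥ (x - y)) - δ * R := by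
      rw [dotProduct_sub]
      unfold hprof
      rw [hR]
      linear_combination -hs
    rw [ht, e1]
    have e2 : τ * (-(σ - (1 - lam)) * (e ⬝ᵥ (x - y)) - δ * R) +
        τ * (σ - (1 - lam)) * (e ⬝ᵥ (x - y)) = -(τ * (δ * R)) := by ring
    rw [e2, abs_neg, abs_mul, abs_mul, abs_of_nonneg t0, abs_of_pos hδ]
    have : 0 ≤ δ * |R| := by positivity
    nlinarith

theorem hprof_bounded {n : ℕ} {lam δ : ℝ} (h0 : 0 < lam) (h1 : lam < 1) (hδ : 0 < δ)
    (e : Fin n → ℝ) (i0 : Fin n) (he : e i0 ≠ 0) :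
    Bornology.IsBounded {x | 0 < hprof lam δ e i0 x} := by
  rw [isBounded_iff_forall_norm_le]
  have hsum : ∀ x : Fin n → ℝ, e ⬝ᵥ x = e i0 * x i0 + ∑ i ∈ Finset.univ.erase i0, e i * x i := by
    intro x
    exact (Finset.add_sum_erase Finset.univ (fun i => e i * x i) (Finset.mem_univ i0)).symm
  set S : ℝ := 1 / lam + 1 / (1 - lam) with hS
  set Q : ℝ := ∑ i ∈ Finset.univ.erase i0, |e i| * (1 / δ) with hQ
  have hS0 : 0 < S := by have : 0 < 1 - lam := by linarith
                         positivity
  have hQ0 : 0 ≤ Q := by positivity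
  refine ⟨1 / δ + (S + Q) / |e i0|, ?_⟩
  intro x hx
  have hx : 0 < hprof lam δ e i0 x := hx
  have hm := mprof_nonneg (s := e ⬝ᵥ x) h0 h1
  have hsn : 0 ≤ ∑ i ∈ Finset.univ.erase i0, |x i| := Finset.sum_nonneg fun _ _ => abs_nonneg _
  have hm1 : max (e ⬝ᵥ x) 0 - (1 - lam) * (e ⬝ᵥ x) < 1 := by
    unfold hprof at hx
    have := mul_nonneg hδ.le hsn
    linarith
  have hd1 : δ * ∑ i ∈ Finset.univ.erase i0, |x i| < 1 := by
    unfold hprof at hx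
    linarith
  have hxi : ∀ i, i ≠ i0 → |x i| ≤ 1 / δ := by
    intro i hi
    have := Finset.single_le_sum (f := fun i => |x i|) (fun i _ => abs_nonneg _)
      (Finset.mem_erase.2 ⟨hi, Finset.mem_univ i⟩)
    rw [le_div_iff₀ hδ]
    nlinarith
  have hs : |e ⬝ᵥ x| ≤ S := by
    have h1l : 0 < 1 - lam := by linarith
    rcases max_cases (e ⬝ᵥ x) 0 with h2 | h2
    · rw [h2.1] at hm1
      rw [abs_of_nonneg h2.2]
      have : e ⬝ᵥ x ≤ 1 / lam := by rw [le_div_iff₀ h0]; linarith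
      have : 0 < 1 / (1 - lam) := by positivity
      linarith
    · rw [h2.1] at hm1
      rw [abs_of_neg h2.2]
      have : -(e ⬝ᵥ x) ≤ 1 / (1 - lam) := by rw [le_div_iff₀ h1l]; linarith
      have : 0 < 1 / lam := by positivity
      linarith
  have hx0 : |x i0| ≤ (S + Q) / |e i0| := by
    rw [le_div_iff₀ (abs_pos.2 he), mul_comm, ← abs_mul]
    have : e i0 * x i0 = e ⬝ᵥ x - ∑ i ∈ Finset.univ.erase i0, e i * x i := by
      rw [hsum]; ring
    rw [this]
    refine (abs_sub _ _).trans (add_le_add hs ?_)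
    refine (Finset.abs_sum_le_sum_abs _ _).trans (Finset.sum_le_sum ?_)
    intro i hi
    rw [abs_mul]
    exact mul_le_mul_of_nonneg_left (hxi i (Finset.ne_of_mem_erase hi)) (abs_nonneg _)
  have p1 : 0 < 1 / δ := by positivity
  have p2 : 0 ≤ (S + Q) / |e i0| := by positivity
  rw [pi_norm_le_iff_of_nonneg (by positivity)]
  intro i
  by_cases hi : i = i0
  · subst hi; rw [Real.norm_eq_abs]; linarith
  · have := hxi i hi; rw [Real.norm_eq_abs]; linarith

theorem hprof_convex {n : ℕ} {lam δ : ℝ} (hδ : 0 < δ)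
    (e : Fin n → ℝ) (i0 : Fin n) :
    Convex ℝ {x | 0 < hprof lam δ e i0 x} := by
  intro x hx y hy a b ha hb hab
  have hx : 0 < hprof lam δ e i0 x := hx
  have hy : 0 < hprof lam δ e i0 y := hy
  show 0 < hprof lam δ e i0 (a • x + b • y)
  have h1 : a * hprof lam δ e i0 x + b * hprof lam δ e i0 y ≤
      hprof lam δ e i0 (a • x + b • y) := by
    unfold hprof
    have hs : e ⬝ᵥ (a • x + b • y) = a * (e ⬝ᵥ x) + b * (e ⬝ᵥ y) := by
      simp [dotProduct_add, dotProduct_smul]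
    have hmx : max (e ⬝ᵥ (a • x + b • y)) 0 ≤ a * max (e ⬝ᵥ x) 0 + b * max (e ⬝ᵥ y) 0 := by
      rw [hs]
      apply max_le
      · gcongr <;> exact le_max_left _ _
      · have := le_max_right (e ⬝ᵥ x) 0
        have := le_max_right (e ⬝ᵥ y) 0
        positivity
    have hsm : ∑ i ∈ Finset.univ.erase i0, |(a • x + b • y) i| ≤
        a * ∑ i ∈ Finset.univ.erase i0, |x i| + b * ∑ i ∈ Finset.univ.erase i0, |y i| := by
      rw [Finset.mul_sum, Finset.mul_sum, ← Finset.sum_add_distrib]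
      apply Finset.sum_le_sum
      intro i _
      simp only [Pi.add_apply, Pi.smul_apply, smul_eq_mul]
      refine (abs_add_le _ _).trans (le_of_eq ?_)
      rw [abs_mul, abs_mul, abs_of_nonneg ha, abs_of_nonneg hb]
    have := mul_le_mul_of_nonneg_left hsm hδ.le
    rw [hs] at hmx ⊢
    have hb' : b = 1 - a := by linarith
    subst hb'
    nlinarith
  rcases ha.eq_or_lt with h | h
  · have : b = 1 := by linarith
    subst h; subst this; linarith
  · have := mul_pos h hx
    have := mul_nonneg hb hy.le
    linarith

theorem null_hyper {n : ℕ} (e : Fin n → ℝ) (he : e ≠ 0) :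
    volume {x : Fin n → ℝ | e ⬝ᵥ x = 0} = 0 := by
  let f : (Fin n → ℝ) →ₗ[ℝ] ℝ :=
    { toFun := fun x => e ⬝ᵥ x, map_add' := fun x y => dotProduct_add e x y,
      map_smul' := fun c x => dotProduct_smul c e x }
  have h := Measure.addHaar_submodule (volume : Measure (Fin n → ℝ)) (LinearMap.ker f) (by
    intro htop
    apply he
    ext i
    have : (Pi.single i 1 : Fin n → ℝ) ∈ LinearMap.ker f := by rw [htop]; trivial
    have h2 : e ⬝ᵥ (Pi.single i 1 : Fin n → ℝ) = 0 := this
    simpa using h2)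
  exact h

/-- negative part of the cell -/
def cellA {n : ℕ} (lam δ : ℝ) (e : Fin n → ℝ) (i0 : Fin n) : Set (Fin n → ℝ) :=
  {x | 0 < hprof lam δ e i0 x ∧ e ⬝ᵥ x < 0 ∧ ∀ i, i ≠ i0 → x i ≠ 0}

/-- positive part of the cell -/
def cellB {n : ℕ} (lam δ : ℝ) (e : Fin n → ℝ) (i0 : Fin n) : Set (Fin n → ℝ) :=
  {x | 0 < hprof lam δ e i0 x ∧ 0 < e ⬝ᵥ x ∧ ∀ i, i ≠ i0 → x i ≠ 0}

theorem isOpen_ne_coords {n : ℕ} (i0 : Fin n) :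
    IsOpen {x : Fin n → ℝ | ∀ i, i ≠ i0 → x i ≠ 0} := by
  have : {x : Fin n → ℝ | ∀ i, i ≠ i0 → x i ≠ 0} = ⋂ i, ⋂ (_ : i ≠ i0), {x | x i ≠ 0} := by
    ext x; simp
  rw [this]
  refine isOpen_iInter_of_finite fun i => isOpen_iInter_of_finite fun _ => ?_
  exact isOpen_ne_fun (continuous_apply i) continuous_const

theorem isOpen_cellA {n : ℕ} (lam δ : ℝ) (e : Fin n → ℝ) (i0 : Fin n) :
    IsOpen (cellA lam δ e i0) := by
  have h1 : IsOpen {x | 0 < hprof lam δ e i0 x} :=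
    isOpen_lt continuous_const (continuous_hprof lam δ e i0)
  have h2 : IsOpen {x : Fin n → ℝ | e ⬝ᵥ x < 0} :=
    isOpen_lt (by unfold dotProduct; fun_prop) continuous_const
  exact h1.inter (h2.inter (isOpen_ne_coords i0))

theorem isOpen_cellB {n : ℕ} (lam δ : ℝ) (e : Fin n → ℝ) (i0 : Fin n) :
    IsOpen (cellB lam δ e i0) := by
  have h1 : IsOpen {x | 0 < hprof lam δ e i0 x} :=
    isOpen_lt continuous_const (continuous_hprof lam δ e i0)
  have h2 : IsOpen {x : Fin n → ℝ | 0 < e ⬝ᵥ x} :=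
    isOpen_lt continuous_const (by unfold dotProduct; fun_prop)
  exact h1.inter (h2.inter (isOpen_ne_coords i0))

theorem cell_null {n : ℕ} (lam δ : ℝ) (e : Fin n → ℝ) (i0 : Fin n) (he : e i0 ≠ 0) :
    volume ({x | 0 < hprof lam δ e i0 x} \ (cellA lam δ e i0 ∪ cellB lam δ e i0)) = 0 := by
  have hnull : volume ({x : Fin n → ℝ | e ⬝ᵥ x = 0} ∪
      ⋃ i, {x : Fin n → ℝ | (Pi.single i 1 : Fin n → ℝ) ⬝ᵥ x = 0}) = 0 := by
    refine measure_union_null (null_hyper e (fun h => he (by simp [h]))) ?_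
    rw [measure_iUnion_null_iff]
    intro i
    exact null_hyper _ (by simp)
  refine measure_mono_null ?_ hnull
  rintro x ⟨hx, hx2⟩
  by_contra hcon
  simp only [mem_union, mem_iUnion, not_or, not_exists, mem_ofPred_eq, single_dotProduct,
    one_mul] at hcon
  apply hx2
  rcases lt_or_gt_of_ne hcon.1 with h | h
  · left; exact ⟨hx, h, fun i _ => hcon.2 i⟩
  · right; exact ⟨hx, h, fun i _ => hcon.2 i⟩

theorem cell_vol {n : ℕ} {lam δ : ℝ} (h0 : 0 < lam) (h1 : lam < 1)
    (e : Fin n → ℝ) (i0 : Fin n) (he : e i0 ≠ 0) :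
    volume (cellA lam δ e i0) = ENNReal.ofReal lam * volume {x | 0 < hprof lam δ e i0 x} ∧
    volume (cellB lam δ e i0) =
      ENNReal.ofReal (1 - lam) * volume {x | 0 < hprof lam δ e i0 x} := by
  have h1l : 0 < 1 - lam := by linarith
  let c : Fin n → ℝ := Pi.single i0 (-(1 / lam) / e i0)
  let Tm : Matrix (Fin n) (Fin n) ℝ :=
    1 + Matrix.replicateCol Unit c * Matrix.replicateRow Unit e
  have hdet : Tm.det = 1 - 1 / lam := by
    simp only [Tm]
    rw [Matrix.det_one_add_replicateCol_mul_replicateRow]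
    simp only [c, dotProduct_single]
    field_simp
    ring
  have hdet' : LinearMap.det (Matrix.toLin' Tm) = 1 - 1 / lam := by
    rw [LinearMap.det_toLin', hdet]
  have hneg : 1 - 1 / lam = -((1 - lam) / lam) := by field_simp; ring
  have hT : ∀ x, Matrix.toLin' Tm x = x + (e ⬝ᵥ x) • c := by
    intro x
    ext i
    simp [Tm, Matrix.mulVec, dotProduct, Matrix.mul_apply,
      Finset.sum_mul]
    refine Finset.sum_congr rfl fun j _ => ?_
    ring
  have hTs : ∀ x, e ⬝ᵥ (Matrix.toLin' Tm x) = -((1 - lam) / lam) * (e ⬝ᵥ x) := by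
    intro x
    rw [hT, dotProduct_add, dotProduct_smul]
    simp only [c, dotProduct_single, smul_eq_mul]
    field_simp
    ring
  have hTi : ∀ x, ∀ i, i ≠ i0 → Matrix.toLin' Tm x i = x i := by
    intro x i hi
    rw [hT]
    simp [c, hi]
  have hpre : (Matrix.toLin' Tm) ⁻¹' (cellB lam δ e i0) = cellA lam δ e i0 := by
    ext x
    have k1 : (0 < e ⬝ᵥ (Matrix.toLin' Tm x)) ↔ e ⬝ᵥ x < 0 := by
      rw [hTs]
      have : 0 < (1 - lam) / lam := by positivity
      constructor <;> intro h <;> nlinarith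
    have k2 : (∀ i, i ≠ i0 → Matrix.toLin' Tm x i ≠ 0) ↔ (∀ i, i ≠ i0 → x i ≠ 0) := by
      refine forall_congr' fun i => forall_congr' fun hi => ?_
      rw [hTi x i hi]
    have k3 : e ⬝ᵥ x < 0 → hprof lam δ e i0 (Matrix.toLin' Tm x) = hprof lam δ e i0 x := by
      intro hx
      unfold hprof
      rw [max_eq_left (k1.2 hx).le, max_eq_right hx.le, hTs]
      have : ∑ i ∈ Finset.univ.erase i0, |Matrix.toLin' Tm x i| =
          ∑ i ∈ Finset.univ.erase i0, |x i| :=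
        Finset.sum_congr rfl fun i hi => by rw [hTi x i (Finset.ne_of_mem_erase hi)]
      rw [this]
      field_simp
      ring
    show (0 < hprof lam δ e i0 (Matrix.toLin' Tm x) ∧ 0 < e ⬝ᵥ (Matrix.toLin' Tm x) ∧
      ∀ i, i ≠ i0 → Matrix.toLin' Tm x i ≠ 0) ↔ (0 < hprof lam δ e i0 x ∧ e ⬝ᵥ x < 0 ∧
        ∀ i, i ≠ i0 → x i ≠ 0)
    rw [k1, k2]
    constructor
    · rintro ⟨a, b, c⟩
      rw [k3 b] at a
      exact ⟨a, b, c⟩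
    · rintro ⟨a, b, c⟩
      rw [← k3 b] at a
      exact ⟨a, b, c⟩
  have hvol : volume (cellA lam δ e i0) =
      ENNReal.ofReal (lam / (1 - lam)) * volume (cellB lam δ e i0) := by
    rw [← hpre, Measure.addHaar_preimage_linearMap]
    · rw [hdet', hneg]
      congr 2
      rw [abs_inv, abs_neg, abs_of_pos (by positivity), inv_div]
    · rw [hdet', hneg]
      have : 0 < (1 - lam) / lam := by positivity
      linarith
  have htot : volume {x | 0 < hprof lam δ e i0 x} =
      volume (cellA lam δ e i0) + volume (cellB lam δ e i0) := by
    rw [← measure_union _ (isOpen_cellB lam δ e i0).measurableSet]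
    · apply le_antisymm
      · have := cell_null lam δ e i0 he
        rw [← measure_sdiff_add_inter {x | 0 < hprof lam δ e i0 x}
          ((isOpen_cellA lam δ e i0).union (isOpen_cellB lam δ e i0)).measurableSet, this, zero_add]
        exact measure_mono inter_subset_right
      · apply measure_mono
        rintro x (hx | hx)
        · exact hx.1
        · exact hx.1
    · rw [Set.disjoint_left]
      intro x hx hx'
      exact lt_asymm hx.2.1 hx'.2.1
  have hB : volume (cellB lam δ e i0) =
      ENNReal.ofReal (1 - lam) * volume {x | 0 < hprof lam δ e i0 x} := by
    rw [htot, hvol]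
    rw [← add_one_mul, ← ENNReal.ofReal_one, ← ENNReal.ofReal_add (by positivity) zero_le_one,
      ← mul_assoc, ← ENNReal.ofReal_mul h1l.le]
    have : (1 - lam) * (lam / (1 - lam) + 1) = 1 := by field_simp; ring
    rw [this]; simp
  refine ⟨?_, hB⟩
  rw [hvol, hB, ← mul_assoc, ← ENNReal.ofReal_mul (by positivity)]
  congr 2
  field_simp

/-- `u` is affine near `x` with gradient in `U`. -/
def LocAff {N n : ℕ} (U : Set (Mat N n)) (u : (Fin n → ℝ) → Fin N → ℝ) (x : Fin n → ℝ) : Prop :=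
  ∃ A ∈ U, ∃ d : Fin N → ℝ, ∀ᶠ y in 𝓝 x, u y = A.mulVec y + d

theorem abs_local {n : ℕ} (i0 : Fin n) (z0 : Fin n → ℝ) (hz : ∀ i, i ≠ i0 → z0 i ≠ 0) :
    ∃ σ : Fin n → ℝ, ‖σ‖ ≤ 1 ∧
      ∀ᶠ z in 𝓝 z0, ∑ i ∈ Finset.univ.erase i0, |z i| = σ ⬝ᵥ z := by
  refine ⟨fun i => if i = i0 then 0 else if 0 < z0 i then 1 else -1, ?_, ?_⟩
  · rw [pi_norm_le_iff_of_nonneg zero_le_one]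
    intro i
    by_cases h : i = i0
    · simp [h]
    · by_cases h2 : 0 < z0 i <;> simp [h, h2]
  · have hev : ∀ᶠ z in 𝓝 z0, ∀ i, i ≠ i0 →
        |z i| = (if i = i0 then 0 else if 0 < z0 i then (1:ℝ) else -1) * z i := by
      rw [eventually_all]
      intro i
      by_cases h : i = i0
      · exact Eventually.of_forall fun z hne => absurd h hne
      · have hc : Tendsto (fun z : Fin n → ℝ => z i) (𝓝 z0) (𝓝 (z0 i)) :=
          (continuous_apply i).continuousAt
        rcases lt_or_gt_of_ne (hz i h) with h2 | h2
        · filter_upwards [hc.eventually (gt_mem_nhds h2)] with z hz1 _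
          have h2' : z i < 0 := hz1
          rw [if_neg h, if_neg (not_lt.2 h2.le), abs_of_neg h2']; ring
        · filter_upwards [hc.eventually (lt_mem_nhds h2)] with z hz1 _
          have h2' : 0 < z i := hz1
          rw [if_neg h, if_pos h2, abs_of_pos h2']; ring
    filter_upwards [hev] with z hz
    rw [dotProduct, ← Finset.add_sum_erase Finset.univ
      (fun i => (if i = i0 then 0 else if 0 < z0 i then (1:ℝ) else -1) * z i)
      (Finset.mem_univ i0)]
    rw [if_pos rfl, zero_mul, zero_add]
    exact Finset.sum_congr rfl fun i hi => hz i (Finset.ne_of_mem_erase hi)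

theorem hprof_localA {n : ℕ} {lam δ : ℝ} (e : Fin n → ℝ) (i0 : Fin n) (z0 : Fin n → ℝ)
    (hz : z0 ∈ cellA lam δ e i0) :
    ∃ σ : Fin n → ℝ, ‖σ‖ ≤ 1 ∧ ∀ᶠ z in 𝓝 z0,
      max (hprof lam δ e i0 z) 0 = 1 + ((1 - lam) • e - δ • σ) ⬝ᵥ z := by
  obtain ⟨σ, h1, h2⟩ := abs_local i0 z0 hz.2.2
  refine ⟨σ, h1, ?_⟩
  filter_upwards [h2, (isOpen_cellA lam δ e i0).mem_nhds hz] with z hz1 hz2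
  rw [max_eq_left hz2.1.le]
  unfold hprof
  rw [max_eq_right hz2.2.1.le, hz1, sub_dotProduct, smul_dotProduct, smul_dotProduct]
  simp only [smul_eq_mul]
  ring

theorem hprof_localB {n : ℕ} {lam δ : ℝ} (e : Fin n → ℝ) (i0 : Fin n) (z0 : Fin n → ℝ)
    (hz : z0 ∈ cellB lam δ e i0) :
    ∃ σ : Fin n → ℝ, ‖σ‖ ≤ 1 ∧ ∀ᶠ z in 𝓝 z0,
      max (hprof lam δ e i0 z) 0 = 1 + ((-lam) • e - δ • σ) ⬝ᵥ z := by
  obtain ⟨σ, h1, h2⟩ := abs_local i0 z0 hz.2.2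
  refine ⟨σ, h1, ?_⟩
  filter_upwards [h2, (isOpen_cellB lam δ e i0).mem_nhds hz] with z hz1 hz2
  rw [max_eq_left hz2.1.le]
  unfold hprof
  rw [max_eq_left hz2.2.1.le, hz1, sub_dotProduct, smul_dotProduct, smul_dotProduct]
  simp only [smul_eq_mul]
  ring

/-- scaled laminate on one cell -/
noncomputable def wcell {N n : ℕ} (C : Mat N n) (b a : Fin N → ℝ) (lam δ : ℝ) (e : Fin n → ℝ)
    (i0 : Fin n) (x : Fin n → ℝ) (r : ℝ) (y : Fin n → ℝ) : Fin N → ℝ :=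
  C.mulVec y + b + (r * max (hprof lam δ e i0 (r⁻¹ • (y - x))) 0) • a

theorem wcell_affine {N n : ℕ} (C : Mat N n) (b a : Fin N → ℝ) (lam δ : ℝ) (e : Fin n → ℝ)
    (i0 : Fin n) (x : Fin n → ℝ) {r : ℝ} (hr : 0 < r) (y0 : Fin n → ℝ) (g : Fin n → ℝ)
    (h : ∀ᶠ z in 𝓝 (r⁻¹ • (y0 - x)), max (hprof lam δ e i0 z) 0 = 1 + g ⬝ᵥ z) :
    ∃ d, ∀ᶠ y in 𝓝 y0, wcell C b a lam δ e i0 x r y = (C + Matrix.vecMulVec a g).mulVec y + d := by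
  have hc : Tendsto (fun y : Fin n → ℝ => r⁻¹ • (y - x)) (𝓝 y0) (𝓝 (r⁻¹ • (y0 - x))) :=
    (by fun_prop : Continuous fun y : Fin n → ℝ => r⁻¹ • (y - x)).continuousAt
  refine ⟨b + (r - g ⬝ᵥ x) • a, ?_⟩
  filter_upwards [hc.eventually h] with y hy
  unfold wcell
  rw [hy, Matrix.add_mulVec, Matrix.vecMulVec_mulVec, dotProduct_smul, dotProduct_sub]
  ext j
  simp only [Pi.add_apply, Pi.smul_apply, smul_eq_mul, MulOpposite.smul_eq_mul_unop,
    MulOpposite.unop_op]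
  field_simp
  ring

theorem wcell_lip {N n : ℕ} {A B C : Mat N n} {a : Fin N → ℝ} {e : Fin n → ℝ}
    (hAB : A - B = Matrix.vecMulVec a e) {lam δ : ℝ} (h0 : 0 < lam) (h1 : lam < 1) (hδ : 0 < δ)
    (hC : C = lam • A + (1 - lam) • B) {M0 : ℝ}
    (hA : ∀ v, ‖A.mulVec v‖ ≤ M0 * ‖v‖) (hB : ∀ v, ‖B.mulVec v‖ ≤ M0 * ‖v‖)
    (M : NNReal) (hM : M0 + 1 ≤ M) (hδa : δ * n * ‖a‖ ≤ 1) (b : Fin N → ℝ) (i0 : Fin n)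
    (x : Fin n → ℝ) {r : ℝ} (hr : 0 < r) : LipschitzWith M (wcell C b a lam δ e i0 x r) := by
  apply LipschitzWith.of_dist_le_mul
  intro y1 y2
  rw [dist_eq_norm, dist_eq_norm]
  obtain ⟨θ, t0, t1, ht⟩ := hprof_slope h0 h1 hδ e i0 (r⁻¹ • (y1 - x)) (r⁻¹ • (y2 - x))
  set q := max (hprof lam δ e i0 (r⁻¹ • (y1 - x))) 0 - max (hprof lam δ e i0 (r⁻¹ • (y2 - x))) 0
    with hq
  have hd : r⁻¹ • (y1 - x) - r⁻¹ • (y2 - x) = r⁻¹ • (y1 - y2) := by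
    rw [← smul_sub]; congr 1; abel
  rw [hd, dotProduct_smul, norm_smul, norm_inv, Real.norm_eq_abs, abs_of_pos hr, smul_eq_mul] at ht
  set d := y1 - y2 with hdd
  set κ := r * q + θ * (e ⬝ᵥ d) with hκ
  have hκb : |κ| ≤ δ * n * ‖d‖ := by
    have : κ = r * (q + θ * (r⁻¹ * (e ⬝ᵥ d))) := by rw [hκ]; field_simp
    rw [this, abs_mul, abs_of_pos hr]
    calc _ ≤ r * (δ * n * (r⁻¹ * ‖d‖)) := by gcongr
      _ = _ := by field_simp
  have hAd : A.mulVec d = B.mulVec d + (e ⬝ᵥ d) • a := by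
    have : A = B + Matrix.vecMulVec a e := by rw [← hAB]; abel
    rw [this, Matrix.add_mulVec, Matrix.vecMulVec_mulVec]
    simp
  have key : wcell C b a lam δ e i0 x r y1 - wcell C b a lam δ e i0 x r y2 =
      (lam - θ) • A.mulVec d + (1 - (lam - θ)) • B.mulVec d + κ • a := by
    have e1 : wcell C b a lam δ e i0 x r y1 - wcell C b a lam δ e i0 x r y2 =
      C.mulVec d + (r * q) • a := by
      unfold wcell
      rw [hq, hdd, Matrix.mulVec_sub, mul_sub, sub_smul]
      abel
    have e2 : r * q = κ - θ * (e ⬝ᵥ d) := by rw [hκ]; ring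
    rw [e1, hC, Matrix.add_mulVec, Matrix.smul_mulVec, Matrix.smul_mulVec, hAd, e2]
    ext j
    simp only [Pi.add_apply, Pi.smul_apply, smul_eq_mul]
    ring
  rw [key]
  have n1 : ‖(lam - θ) • A.mulVec d‖ ≤ (lam - θ) * (M0 * ‖d‖) := by
    rw [norm_smul, Real.norm_eq_abs, abs_of_nonneg (by linarith)]
    exact mul_le_mul_of_nonneg_left (hA d) (by linarith)
  have n2 : ‖(1 - (lam - θ)) • B.mulVec d‖ ≤ (1 - (lam - θ)) * (M0 * ‖d‖) := by
    rw [norm_smul, Real.norm_eq_abs, abs_of_nonneg (by linarith)]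
    exact mul_le_mul_of_nonneg_left (hB d) (by linarith)
  have n3 : ‖κ • a‖ ≤ 1 * ‖d‖ := by
    rw [norm_smul, Real.norm_eq_abs]
    calc |κ| * ‖a‖ ≤ (δ * n * ‖d‖) * ‖a‖ := by gcongr
      _ = (δ * n * ‖a‖) * ‖d‖ := by ring
      _ ≤ 1 * ‖d‖ := by gcongr
  calc _ ≤ ‖(lam - θ) • A.mulVec d‖ + ‖(1 - (lam - θ)) • B.mulVec d‖ + ‖κ • a‖ := norm_add₃_le
    _ ≤ (lam - θ) * (M0 * ‖d‖) + (1 - (lam - θ)) * (M0 * ‖d‖) + 1 * ‖d‖ := by gcongr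
    _ = (M0 + 1) * ‖d‖ := by ring
    _ ≤ M * ‖d‖ := by gcongr

theorem lip_affine {N n : ℕ} {A : Mat N n} {M : NNReal}
    (hA : ∀ v, ‖A.mulVec v‖ ≤ M * ‖v‖) (b : Fin N → ℝ) :
    LipschitzWith M (fun x => A.mulVec x + b) := by
  apply LipschitzWith.of_dist_le_mul
  intro x y
  rw [dist_eq_norm, dist_eq_norm, add_sub_add_right_eq_sub, ← Matrix.mulVec_sub]
  exact hA _

theorem hprof_le_one {n : ℕ} {lam δ : ℝ} (h0 : 0 < lam) (h1 : lam < 1) (hδ : 0 < δ)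
    (e : Fin n → ℝ) (i0 : Fin n) (x : Fin n → ℝ) : hprof lam δ e i0 x ≤ 1 := by
  unfold hprof
  have := mprof_nonneg (s := e ⬝ᵥ x) h0 h1
  have hsn : 0 ≤ ∑ i ∈ Finset.univ.erase i0, |x i| := Finset.sum_nonneg fun _ _ => abs_nonneg _
  have := mul_nonneg hδ.le hsn
  linarith

theorem nbhd_small {N n : ℕ} (A : Mat N n) (a : Fin N → ℝ) (W : Set (Mat N n)) (hW : W ∈ 𝓝 A) :
    ∃ ρ > 0, ∀ σ : Fin n → ℝ, ‖σ‖ < ρ → A - Matrix.vecMulVec a σ ∈ W := by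
  have hc : Continuous fun σ : Fin n → ℝ => A - Matrix.vecMulVec a σ := by
    refine continuous_const.sub ?_
    refine continuous_matrix fun i j => ?_
    simp only [Matrix.vecMulVec_apply]
    fun_prop
  have hz : A - Matrix.vecMulVec a (0 : Fin n → ℝ) = A := by
    ext i j; simp [Matrix.vecMulVec_apply]
  have h : ∀ᶠ σ in 𝓝 (0 : Fin n → ℝ), A - Matrix.vecMulVec a σ ∈ W := by
    apply hc.continuousAt.eventually_mem
    rw [hz]; exact hW
  obtain ⟨ρ, hρ, h2⟩ := Metric.eventually_nhds_iff.1 h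
  exact ⟨ρ, hρ, fun σ hσ => h2 (by simpa [dist_eq_norm] using hσ)⟩

set_option maxHeartbeats 1000000 in
theorem laminate {N n : ℕ} {A B C : Mat N n} {a : Fin N → ℝ} {e : Fin n → ℝ} (he : e ≠ 0)
    (hAB : A - B = Matrix.vecMulVec a e) {lam : ℝ} (h0 : 0 < lam) (h1 : lam < 1)
    (hC : C = lam • A + (1 - lam) • B) {M0 : ℝ}
    (hA : ∀ v, ‖A.mulVec v‖ ≤ M0 * ‖v‖) (hB : ∀ v, ‖B.mulVec v‖ ≤ M0 * ‖v‖)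
    (M : NNReal) (hM : M0 + 1 ≤ M) (WA WB : Set (Mat N n)) (hWA : WA ∈ 𝓝 A) (hWB : WB ∈ 𝓝 B)
    (Ω : Set (Fin n → ℝ)) (hΩ : IsOpen Ω) (b : Fin N → ℝ) (ε : ℝ) (hε : 0 < ε) :
    ∃ (u : (Fin n → ℝ) → Fin N → ℝ) (VA VB : Set (Fin n → ℝ)),
      LipschitzWith M u ∧ (∀ x, x ∉ Ω → u x = C.mulVec x + b) ∧
      (∀ x, ‖u x - (C.mulVec x + b)‖ ≤ ε) ∧ IsOpen VA ∧ IsOpen VB ∧ VA ⊆ Ω ∧ VB ⊆ Ω ∧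
      Disjoint VA VB ∧ volume (Ω \ (VA ∪ VB)) = 0 ∧
      (∀ x ∈ VA, LocAff WA u x) ∧ (∀ x ∈ VB, LocAff WB u x) ∧
      volume VA = ENNReal.ofReal lam * volume Ω ∧
      volume VB = ENNReal.ofReal (1 - lam) * volume Ω := by
  have h1l : 0 < 1 - lam := by linarith
  obtain ⟨i0, hi0⟩ : ∃ i, e i ≠ 0 := by
    by_contra h; push Not at h; exact he (funext h)
  obtain ⟨ρA, hρA, hA2⟩ := nbhd_small A a WA hWA
  obtain ⟨ρB, hρB, hB2⟩ := nbhd_small B a WB hWB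
  obtain ⟨δ, hδ, hδA, hδB, hδa⟩ : ∃ δ : ℝ, 0 < δ ∧ δ < ρA ∧ δ < ρB ∧ δ * n * ‖a‖ ≤ 1 := by
    refine ⟨min (min (ρA / 2) (ρB / 2)) (1 / (n * ‖a‖ + 1)), by positivity, ?_, ?_, ?_⟩
    · exact ((min_le_left _ _).trans (min_le_left _ _)).trans_lt (by linarith)
    · exact ((min_le_left _ _).trans (min_le_right _ _)).trans_lt (by linarith)
    · have := min_le_right (min (ρA / 2) (ρB / 2)) (1 / (n * ‖a‖ + 1))
      have hp : 0 ≤ (n : ℝ) * ‖a‖ := by positivity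
      calc _ = min (min (ρA / 2) (ρB / 2)) (1 / (n * ‖a‖ + 1)) * (n * ‖a‖) := by ring
        _ ≤ 1 / (n * ‖a‖ + 1) * (n * ‖a‖) := by gcongr
        _ ≤ 1 := by rw [div_mul_eq_mul_div, div_le_one (by positivity)]; linarith
  set P : Set (Fin n → ℝ) := {x | 0 < hprof lam δ e i0 x} with hP
  have hPo : IsOpen P := isOpen_lt continuous_const (continuous_hprof lam δ e i0)
  have hP0 : (0 : Fin n → ℝ) ∈ P := by
    show 0 < hprof lam δ e i0 0
    simp [hprof]
  obtain ⟨t, htc, htr, htΩ, htd, ht0⟩ := vitali_cover P hPo (hprof_convex hδ e i0)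
    (hprof_bounded h0 h1 hδ e i0 hi0) hP0 Ω hΩ (ε / (‖a‖ + 1)) (by positivity)
  have : Countable t := htc.to_subtype
  let sc : t → Set (Fin n → ℝ) → Set (Fin n → ℝ) := fun p S => {y | p.1.2⁻¹ • (y - p.1.1) ∈ S}
  have hcont : ∀ p : t, Continuous fun y : Fin n → ℝ => p.1.2⁻¹ • (y - p.1.1) := by
    intro a; fun_prop
  have hsco : ∀ p S, IsOpen S → IsOpen (sc p S) := fun p S hS => hS.preimage (hcont p)
  have hscd : ∀ p q : t, p ≠ q → Disjoint (sc p P) (sc q P) := fun p q hpq =>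
    htd p.2 q.2 (fun h => hpq (Subtype.ext h))
  have hscv : ∀ p S, volume (sc p S) = ENNReal.ofReal (p.1.2 ^ n) * volume S := fun p S =>
    vol_scaled S _ (htr p.1 p.2).1
  have hscm : ∀ p {S T : Set (Fin n → ℝ)}, S ⊆ T → sc p S ⊆ sc p T := fun p S T h y hy => h hy
  let w : t → (Fin n → ℝ) → Fin N → ℝ := fun p => wcell C b a lam δ e i0 p.1.1 p.1.2
  have hwoff : ∀ p, ∀ x, x ∉ sc p P → w p x = C.mulVec x + b := by
    intro p x hx
    have : hprof lam δ e i0 (p.1.2⁻¹ • (x - p.1.1)) ≤ 0 := not_lt.1 hx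
    simp only [w, wcell]
    rw [max_eq_right this]
    simp
  have hCb : ∀ v, ‖C.mulVec v‖ ≤ M * ‖v‖ := by
    intro v
    rw [hC, Matrix.add_mulVec, Matrix.smul_mulVec, Matrix.smul_mulVec]
    calc _ ≤ ‖lam • A.mulVec v‖ + ‖(1 - lam) • B.mulVec v‖ := norm_add_le _ _
      _ = lam * ‖A.mulVec v‖ + (1 - lam) * ‖B.mulVec v‖ := by
        rw [norm_smul, norm_smul, Real.norm_eq_abs, Real.norm_eq_abs, abs_of_pos h0, abs_of_pos h1l]
      _ ≤ lam * (M0 * ‖v‖) + (1 - lam) * (M0 * ‖v‖) := add_le_add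
        (mul_le_mul_of_nonneg_left (hA v) h0.le) (mul_le_mul_of_nonneg_left (hB v) h1l.le)
      _ = M0 * ‖v‖ := by ring
      _ ≤ M * ‖v‖ := by gcongr; linarith
  obtain ⟨u, huL, huin, huout⟩ := glue_s1 M (fun p : t => sc p P) (fun p => hsco p P hPo) hscd
    (fun x => C.mulVec x + b) (lip_affine hCb b) w
    (fun p => wcell_lip hAB h0 h1 hδ hC hA hB M hM hδa b i0 _ (htr p.1 p.2).1)
    (by
      intro p x hx
      apply hwoff
      rw [(hsco p P hPo).frontier_eq] at hx
      exact hx.2)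
  have hsub : ∀ p, sc p P ⊆ Ω := fun p => htΩ p.1 p.2
  have hnull : volume (Ω \ ⋃ p : t, sc p P) = 0 := by
    rw [← ht0]; congr 2
    rw [biUnion_eq_iUnion]
  have cA : cellA lam δ e i0 ⊆ P := fun x hx => hx.1
  have cB : cellB lam δ e i0 ⊆ P := fun x hx => hx.1
  have cAB : Disjoint (cellA lam δ e i0) (cellB lam δ e i0) := by
    rw [Set.disjoint_left]
    intro x hx hx'
    exact lt_asymm hx.2.1 hx'.2.1
  have hvΩ : volume Ω = ∑' p : t, volume (sc p P) := by
    rw [← measure_iUnion hscd (fun p => (hsco p P hPo).measurableSet)]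
    apply le_antisymm
    · rw [← measure_sdiff_add_inter Ω
        (isOpen_iUnion fun p => hsco p P hPo).measurableSet, hnull, zero_add]
      exact measure_mono inter_subset_right
    · exact measure_mono (iUnion_subset hsub)
  have hvol : ∀ (S : Set (Fin n → ℝ)) (c : ENNReal), IsOpen S → S ⊆ P →
      volume S = c * volume P → volume (⋃ p : t, sc p S) = c * volume Ω := by
    intro S c hS hSP hc
    rw [measure_iUnion (fun p q hpq => (hscd p q hpq).mono (hscm p hSP) (hscm q hSP))
      (fun p => (hsco p S hS).measurableSet), hvΩ, ← ENNReal.tsum_mul_left]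
    refine tsum_congr fun p => ?_
    rw [hscv, hscv, hc]; ring
  have hloc : ∀ p x, x ∈ sc p P → u =ᶠ[𝓝 x] w p := by
    intro p x hx
    filter_upwards [(hsco p P hPo).mem_nhds hx] with y hy using huin p y hy
  have hAC : A = C + Matrix.vecMulVec a ((1 - lam) • e) := by
    rw [Matrix.vecMulVec_smul, ← hAB, hC]
    module
  have hBC : B = C + Matrix.vecMulVec a ((-lam) • e) := by
    rw [Matrix.vecMulVec_smul, ← hAB, hC]
    module
  have hsm : ∀ σ : Fin n → ℝ, ‖σ‖ ≤ 1 → ‖δ • σ‖ ≤ δ := by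
    intro σ hσ
    rw [norm_smul, Real.norm_eq_abs, abs_of_pos hδ]
    nlinarith
  refine ⟨u, ⋃ p : t, sc p (cellA lam δ e i0), ⋃ p : t, sc p (cellB lam δ e i0), huL, ?_, ?_,
    isOpen_iUnion fun p => hsco p _ (isOpen_cellA _ _ _ _),
    isOpen_iUnion fun p => hsco p _ (isOpen_cellB _ _ _ _),
    iUnion_subset fun p => (hscm p cA).trans (hsub p),
    iUnion_subset fun p => (hscm p cB).trans (hsub p), ?_, ?_, ?_, ?_,
    hvol _ _ (isOpen_cellA _ _ _ _) cA (cell_vol h0 h1 e i0 hi0).1,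
    hvol _ _ (isOpen_cellB _ _ _ _) cB (cell_vol h0 h1 e i0 hi0).2⟩
  · intro x hx
    exact huout x fun p hp => hx (hsub p hp)
  · intro x
    by_cases hx : ∃ p, x ∈ sc p P
    · obtain ⟨p, hp⟩ := hx
      rw [huin p x hp]
      simp only [w, wcell]
      rw [add_sub_cancel_left, norm_smul, Real.norm_eq_abs]
      have hr := htr p.1 p.2
      have hle : max (hprof lam δ e i0 (p.1.2⁻¹ • (x - p.1.1))) 0 ≤ 1 :=
        max_le (hprof_le_one h0 h1 hδ _ _ _) zero_le_one
      have hge := le_max_right (hprof lam δ e i0 (p.1.2⁻¹ • (x - p.1.1))) 0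
      rw [abs_of_nonneg (mul_nonneg hr.1.le hge)]
      calc _ ≤ (ε / (‖a‖ + 1) * 1) * ‖a‖ := by
            gcongr
            exact hr.2
        _ ≤ ε := by
          rw [mul_one, div_mul_eq_mul_div, div_le_iff₀ (by positivity)]
          nlinarith [norm_nonneg a]
    · push Not at hx
      rw [huout x hx]
      simpa using hε.le
  · rw [Set.disjoint_iUnion_left]
    intro p
    rw [Set.disjoint_iUnion_right]
    intro q
    by_cases hpq : p = q
    · subst hpq
      exact Set.disjoint_left.2 fun y h h' => Set.disjoint_left.1 cAB h h'
    · exact (hscd p q hpq).mono (hscm p cA) (hscm q cB)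
  · have hn2 : volume (⋃ p : t, sc p (P \ (cellA lam δ e i0 ∪ cellB lam δ e i0))) = 0 := by
      rw [measure_iUnion_null_iff]
      intro p
      rw [hscv, cell_null lam δ e i0 hi0, mul_zero]
    refine measure_mono_null ?_ (measure_union_null hnull hn2)
    rintro y ⟨hy, hy2⟩
    by_cases h : y ∈ ⋃ p : t, sc p P
    · right
      obtain ⟨p, hp⟩ := mem_iUnion.1 h
      refine mem_iUnion.2 ⟨p, hp, ?_⟩
      rintro (h' | h')
      · exact hy2 (Or.inl (mem_iUnion.2 ⟨p, h'⟩))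
      · exact hy2 (Or.inr (mem_iUnion.2 ⟨p, h'⟩))
    · left; exact ⟨hy, h⟩
  · intro x hx
    obtain ⟨p, hp⟩ := mem_iUnion.1 hx
    obtain ⟨σ, hσ, hσ2⟩ := hprof_localA e i0 _ hp
    obtain ⟨d, hd⟩ := wcell_affine C b a lam δ e i0 p.1.1 (htr p.1 p.2).1 x _ hσ2
    refine ⟨_, ?_, d, (hloc p x (hscm p cA hp)).trans hd⟩
    have := hA2 (δ • σ) ((hsm σ hσ).trans_lt hδA)
    rwa [hAC, add_sub_assoc, ← Matrix.vecMulVec_sub] at this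
  · intro x hx
    obtain ⟨p, hp⟩ := mem_iUnion.1 hx
    obtain ⟨σ, hσ, hσ2⟩ := hprof_localB e i0 _ hp
    obtain ⟨d, hd⟩ := wcell_affine C b a lam δ e i0 p.1.1 (htr p.1 p.2).1 x _ hσ2
    refine ⟨_, ?_, d, (hloc p x (hscm p cB hp)).trans hd⟩
    have := hB2 (δ • σ) ((hsm σ hσ).trans_lt hδB)
    rwa [hBC, add_sub_assoc, ← Matrix.vecMulVec_sub] at this

theorem matGrad_of_ev {N n : ℕ} {u : (Fin n → ℝ) → Fin N → ℝ} {x : Fin n → ℝ} {A : Mat N n}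
    {d : Fin N → ℝ} (h : ∀ᶠ y in 𝓝 x, u y = A.mulVec y + d) : matGrad u x = A := by
  have h1 : HasFDerivAt (fun y : Fin n → ℝ => A.mulVec y + d)
      (LinearMap.toContinuousLinearMap (Matrix.toLin' A)) x := by
    have := (LinearMap.toContinuousLinearMap (Matrix.toLin' A)).hasFDerivAt (x := x)
    exact this.add_const d
  have h2 : HasFDerivAt u (LinearMap.toContinuousLinearMap (Matrix.toLin' A)) x :=
    h1.congr_of_eventuallyEq h
  unfold matGrad
  rw [h2.fderiv]
  simp

theorem matGrad_congr {N n : ℕ} {u v : (Fin n → ℝ) → Fin N → ℝ} {x : Fin n → ℝ}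
    (h : u =ᶠ[𝓝 x] v) : matGrad u x = matGrad v x := by
  unfold matGrad; rw [h.fderiv_eq]

theorem LocAff.congr {N n : ℕ} {U : Set (Mat N n)} {u v : (Fin n → ℝ) → Fin N → ℝ}
    {x : Fin n → ℝ} (h : LocAff U v x) (huv : u =ᶠ[𝓝 x] v) : LocAff U u x := by
  obtain ⟨A, hA, d, hd⟩ := h
  exact ⟨A, hA, d, huv.trans hd⟩

/-- Domain where `u` is locally a given affine map. -/
def Gset {N n : ℕ} (V : Set (Fin n → ℝ)) (u : (Fin n → ℝ) → Fin N → ℝ)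
    (p : Mat N n × (Fin N → ℝ)) : Set (Fin n → ℝ) :=
  V ∩ {x | ∀ᶠ y in 𝓝 x, u y = p.1.mulVec y + p.2}

theorem Gset_open {N n : ℕ} {V : Set (Fin n → ℝ)} (hV : IsOpen V) (u : (Fin n → ℝ) → Fin N → ℝ)
    (p : Mat N n × (Fin N → ℝ)) : IsOpen (Gset V u p) :=
  hV.inter isOpen_setOfPred_eventually_nhds

theorem Gset_disj {N n : ℕ} (V : Set (Fin n → ℝ)) (u : (Fin n → ℝ) → Fin N → ℝ)
    (p q : Mat N n × (Fin N → ℝ)) (hpq : p ≠ q) : Disjoint (Gset V u p) (Gset V u q) := by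
  rw [Set.disjoint_left]
  rintro x ⟨_, hp⟩ ⟨_, hq⟩
  apply hpq
  have hp : ∀ᶠ y in 𝓝 x, u y = p.1.mulVec y + p.2 := hp
  have hq : ∀ᶠ y in 𝓝 x, u y = q.1.mulVec y + q.2 := hq
  have e1 : p.1 = q.1 := by rw [← matGrad_of_ev hp, matGrad_of_ev hq]
  have e2 := hp.self_of_nhds
  rw [hq.self_of_nhds, e1] at e2
  exact Prod.ext e1 (add_left_cancel e2).symm

theorem Gset_countable {N n : ℕ} {V : Set (Fin n → ℝ)} (hV : IsOpen V)
    (u : (Fin n → ℝ) → Fin N → ℝ) (W : Set (Mat N n)) :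
    Countable {p : Mat N n × (Fin N → ℝ) // p.1 ∈ W ∧ (Gset V u p).Nonempty} := by
  refine Pairwise.countable_of_isOpen_disjoint
    (s := fun p : {p : Mat N n × (Fin N → ℝ) // p.1 ∈ W ∧ (Gset V u p).Nonempty} => Gset V u p.1)
    ?_ (fun p => Gset_open hV u p.1) (fun p => p.2.2)
  intro p q hpq
  exact Gset_disj V u p.1 q.1 fun h => hpq (Subtype.ext h)

/-- Relaxation with bound `c` on every open set. -/
def SProp {N n : ℕ} (U : Set (Mat N n)) (M : NNReal) (f : Mat N n → ℝ) (ξ : Mat N n) (c : ℝ) :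
    Prop :=
  ∀ ε > 0, ∀ Ω : Set (Fin n → ℝ), IsOpen Ω → ∀ b : Fin N → ℝ,
    ∃ u : (Fin n → ℝ) → Fin N → ℝ, LipschitzWith M u ∧ (∀ x, x ∉ Ω → u x = ξ.mulVec x + b) ∧
      (∀ x, ‖u x - (ξ.mulVec x + b)‖ ≤ ε) ∧ (∀ᵐ x ∂(volume.restrict Ω), LocAff U u x) ∧
      ∫⁻ x in Ω, ENNReal.ofReal (f (matGrad u x)) ≤ ENNReal.ofReal c * volume Ω

/-- Stable version of `SProp`. -/
def TProp {N n : ℕ} (U : Set (Mat N n)) (M : NNReal) (f : Mat N n → ℝ) (ξ : Mat N n) (c : ℝ) :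
    Prop :=
  ∀ ε > 0, ∀ᶠ ξ' in 𝓝 ξ, SProp U M f ξ' (c + ε)

theorem SProp.mono {N n : ℕ} {U : Set (Mat N n)} {M : NNReal} {f : Mat N n → ℝ} {ξ : Mat N n}
    {c c' : ℝ} (h : SProp U M f ξ c) (hc : c ≤ c') : SProp U M f ξ c' := by
  intro ε hε Ω hΩ b
  obtain ⟨u, h1, h2, h3, h4, h5⟩ := h ε hε Ω hΩ b
  exact ⟨u, h1, h2, h3, h4, h5.trans (by gcongr)⟩

theorem TProp.mono {N n : ℕ} {U : Set (Mat N n)} {M : NNReal} {f : Mat N n → ℝ} {ξ : Mat N n}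
    {c c' : ℝ} (h : TProp U M f ξ c) (hc : c ≤ c') : TProp U M f ξ c' := by
  intro ε hε
  filter_upwards [h ε hε] with ξ' h'
  exact h'.mono (by linarith)

theorem sprop_base {N n : ℕ} {U : Set (Mat N n)} {M : NNReal} {f : Mat N n → ℝ} {ξ : Mat N n}
    {c : ℝ} (hξ : ξ ∈ U) (hM : ∀ v, ‖ξ.mulVec v‖ ≤ M * ‖v‖) (hc : f ξ ≤ c) :
    SProp U M f ξ c := by
  intro ε hε Ω hΩ b
  have hev : ∀ x, ∀ᶠ y in 𝓝 x, (fun x => ξ.mulVec x + b) y = ξ.mulVec y + b := fun x =>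
    Eventually.of_forall fun y => rfl
  refine ⟨fun x => ξ.mulVec x + b, lip_affine hM b, fun x _ => rfl, fun x => by simpa using hε.le,
    Eventually.of_forall fun x => ⟨ξ, hξ, b, hev x⟩, ?_⟩
  have : ∀ x, matGrad (fun x => ξ.mulVec x + b) x = ξ := fun x => matGrad_of_ev (hev x)
  simp only [this]
  rw [setLIntegral_const]
  gcongr

theorem tprop_base {N n : ℕ} {U : Set (Mat N n)} (hU : IsOpen U) {M : NNReal} {f : Mat N n → ℝ}
    (hf : Continuous f) {ξ : Mat N n} (hξ : ξ ∈ U)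
    (hM : ∀ ξ ∈ U, ∀ v, ‖ξ.mulVec v‖ ≤ M * ‖v‖) : TProp U M f ξ (f ξ) := by
  intro ε hε
  have h1 : ∀ᶠ ξ' in 𝓝 ξ, f ξ' < f ξ + ε :=
    hf.continuousAt.eventually (gt_mem_nhds (by linarith))
  filter_upwards [h1, hU.mem_nhds hξ] with ξ' h2 h3
  exact sprop_base h3 (hM ξ' h3) h2.le

theorem refine_map {N n : ℕ} {U : Set (Mat N n)} {M : NNReal} {f : Mat N n → ℝ} {c : ℝ}
    (V : Set (Fin n → ℝ)) (hV : IsOpen V) (u : (Fin n → ℝ) → Fin N → ℝ) (hu : LipschitzWith M u)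
    (W : Set (Mat N n)) (hloc : ∀ x ∈ V, LocAff W u x) (hW : ∀ ξ ∈ W, SProp U M f ξ c)
    (ε : ℝ) (hε : 0 < ε) :
    ∃ v : (Fin n → ℝ) → Fin N → ℝ, LipschitzWith M v ∧ (∀ x, x ∉ V → v x = u x) ∧
      (∀ x, ‖v x - u x‖ ≤ ε) ∧ (∀ᵐ x ∂(volume.restrict V), LocAff U v x) ∧
      ∫⁻ x in V, ENNReal.ofReal (f (matGrad v x)) ≤ ENNReal.ofReal c * volume V := by
  let ι := {p : Mat N n × (Fin N → ℝ) // p.1 ∈ W ∧ (Gset V u p).Nonempty}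
  have : Countable ι := Gset_countable hV u W
  let G : ι → Set (Fin n → ℝ) := fun p => Gset V u p.1
  have hGo : ∀ p, IsOpen (G p) := fun p => Gset_open hV u p.1
  have hGd : ∀ p q, p ≠ q → Disjoint (G p) (G q) := fun p q hpq =>
    Gset_disj V u p.1 q.1 fun h => hpq (Subtype.ext h)
  have hGV : ⋃ p, G p = V := by
    apply subset_antisymm
    · exact iUnion_subset fun p => inter_subset_left
    · intro x hx
      obtain ⟨A, hA, d, hd⟩ := hloc x hx
      have hx' : x ∈ Gset V u (A, d) := ⟨hx, hd⟩
      exact mem_iUnion.2 ⟨⟨(A, d), hA, ⟨x, hx'⟩⟩, hx'⟩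
  have hS := fun p : ι => hW p.1.1 p.2.1 ε hε (G p) (hGo p) p.1.2
  choose w w1 w2 w3 w4 w5 using hS
  have hcl : ∀ p : ι, ∀ x ∈ closure (G p), u x = p.1.1.mulVec x + p.1.2 := by
    intro p
    have hc : IsClosed {x | u x = p.1.1.mulVec x + p.1.2} :=
      isClosed_eq hu.continuous (by fun_prop)
    have hsub : G p ⊆ {x | u x = p.1.1.mulVec x + p.1.2} := by
      rintro x ⟨_, hx⟩
      exact Eventually.self_of_nhds hx
    intro x hx
    exact closure_minimal hsub hc hx
  obtain ⟨v, v1, v2, v3⟩ := glue_s1 M G hGo hGd u hu w w1 (by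
    intro p x hx
    rw [hcl p x hx.1]
    apply w2
    rw [(hGo p).frontier_eq] at hx
    exact hx.2)
  have hvw : ∀ p, ∀ x ∈ G p, v =ᶠ[𝓝 x] w p := by
    intro p x hx
    filter_upwards [(hGo p).mem_nhds hx] with y hy using v2 p y hy
  refine ⟨v, v1, ?_, ?_, ?_, ?_⟩
  · intro x hx
    apply v3
    intro p hp
    exact hx hp.1
  · intro x
    by_cases hx : ∃ p, x ∈ G p
    · obtain ⟨p, hp⟩ := hx
      rw [v2 p x hp, hcl p x (subset_closure hp)]
      exact w3 p x
    · push Not at hx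
      rw [v3 x hx]
      simpa using hε.le
  · rw [← hGV, ae_restrict_iUnion_iff]
    intro p
    have hm : ∀ᵐ x ∂(volume.restrict (G p)), x ∈ G p := ae_restrict_mem (hGo p).measurableSet
    filter_upwards [w4 p, hm] with x hx hxm
    exact hx.congr (hvw p x hxm)
  · rw [← hGV, lintegral_iUnion (fun p => (hGo p).measurableSet) hGd,
      measure_iUnion hGd (fun p => (hGo p).measurableSet), ← ENNReal.tsum_mul_left]
    refine ENNReal.tsum_le_tsum fun p => ?_
    refine le_trans (le_of_eq ?_) (w5 p)
    refine setLIntegral_congr_fun (hGo p).measurableSet ?_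
    intro x hx
    simp only [matGrad_congr (hvw p x hx)]

theorem tprop_mix {N n : ℕ} {U : Set (Mat N n)} (hU : IsOpen U) {M0 : ℝ} {M : NNReal}
    (hM : M0 + 1 ≤ M) (hM0 : ∀ ξ ∈ U, ∀ v, ‖ξ.mulVec v‖ ≤ M0 * ‖v‖) {f : Mat N n → ℝ}
    {A B : Mat N n} (hA : A ∈ U) (hB : B ∈ U) (hAB : (A - B).rank = 1) {lam : ℝ}
    (h0 : 0 < lam) (h1 : lam < 1) {cA cB : ℝ} (hcA : 0 ≤ cA) (hcB : 0 ≤ cB)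
    (hTA : TProp U M f A cA) (hTB : TProp U M f B cB) :
    TProp U M f (lam • A + (1 - lam) • B) (lam * cA + (1 - lam) * cB) := by
  have h1l : 0 < 1 - lam := by linarith
  obtain ⟨a, e, he, hae⟩ := rank_one_decomp _ hAB
  intro ε hε
  set QA := interior ({ξ | SProp U M f ξ (cA + ε)} ∩ U) with hQA
  set QB := interior ({ξ | SProp U M f ξ (cB + ε)} ∩ U) with hQB
  have mA : A ∈ QA := mem_interior_iff_mem_nhds.2 (inter_mem (hTA ε hε) (hU.mem_nhds hA))
  have mB : B ∈ QB := mem_interior_iff_mem_nhds.2 (inter_mem (hTB ε hε) (hU.mem_nhds hB))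
  set C := lam • A + (1 - lam) • B with hC
  have cont : ∀ D : Mat N n, Tendsto (fun ξ' : Mat N n => D + (ξ' - C)) (𝓝 C) (𝓝 D) := by
    intro D
    have h : Continuous fun ξ' : Mat N n => D + (ξ' - C) := by fun_prop
    have := h.tendsto C
    simpa using this
  filter_upwards [(cont A).eventually (isOpen_interior.mem_nhds mA),
    (cont B).eventually (isOpen_interior.mem_nhds mB)] with ξ' hA' hB'
  set A' := A + (ξ' - C) with hA'd
  set B' := B + (ξ' - C) with hB'd
  have hA' : A' ∈ QA := hA'
  have hB' : B' ∈ QB := hB'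
  intro ε2 hε2 Ω hΩ b
  have hAB' : A' - B' = Matrix.vecMulVec a e := by
    rw [← hae, hA'd, hB'd]; abel
  have hC' : ξ' = lam • A' + (1 - lam) • B' := by
    rw [hA'd, hB'd, hC]; module
  obtain ⟨u, VA, VB, uL, uoff, uε, oA, oB, sA, sB, dAB, null, lA, lB, vA, vB⟩ :=
    laminate he hAB' h0 h1 hC' (hM0 A' (interior_subset hA').2) (hM0 B' (interior_subset hB').2)
      M hM QA QB (isOpen_interior.mem_nhds hA') (isOpen_interior.mem_nhds hB') Ω hΩ b (ε2 / 3)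
      (by positivity)
  obtain ⟨v, vL, voff, vε, vloc, vint⟩ := refine_map (U := U) (f := f) (c := cA + ε) VA oA u uL QA lA
    (fun ξ hξ => (interior_subset hξ).1) (ε2 / 3) (by positivity)
  have hvu : ∀ x ∈ VB, v =ᶠ[𝓝 x] u := by
    intro x hx
    filter_upwards [oB.mem_nhds hx] with y hy
    exact voff y fun h => Set.disjoint_left.1 dAB h hy
  obtain ⟨z, zL, zoff, zε, zloc, zint⟩ := refine_map (U := U) (f := f) (c := cB + ε) VB oB v vL QB
    (fun x hx => (lB x hx).congr (hvu x hx))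
    (fun ξ hξ => (interior_subset hξ).1) (ε2 / 3) (by positivity)
  have hzv : ∀ x ∈ VA, z =ᶠ[𝓝 x] v := by
    intro x hx
    filter_upwards [oA.mem_nhds hx] with y hy
    exact zoff y fun h => Set.disjoint_left.1 dAB hy h
  have hsub : Ω ⊆ (VA ∪ VB) ∪ (Ω \ (VA ∪ VB)) := by
    intro x hx
    by_cases h : x ∈ VA ∪ VB
    · exact Or.inl h
    · exact Or.inr ⟨hx, h⟩
  refine ⟨z, zL, ?_, ?_, ?_, ?_⟩
  · intro x hx
    rw [zoff x fun h => hx (sB h), voff x fun h => hx (sA h), uoff x hx]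
  · intro x
    have : z x - (ξ'.mulVec x + b) = (z x - v x) + (v x - u x) + (u x - (ξ'.mulVec x + b)) := by
      abel
    rw [this]
    refine norm_add₃_le.trans ?_
    have := zε x
    have := vε x
    have := uε x
    linarith
  · refine ae_restrict_of_ae_restrict_of_subset hsub ?_
    rw [ae_restrict_union_iff, ae_restrict_union_iff]
    refine ⟨⟨?_, zloc⟩, ?_⟩
    · have hm : ∀ᵐ x ∂(volume.restrict VA), x ∈ VA := ae_restrict_mem oA.measurableSet
      filter_upwards [vloc, hm] with x hx hxm
      exact hx.congr (hzv x hxm)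
    · rw [Measure.restrict_eq_zero.2 null]; simp
  · have i1 : ∫⁻ x in VA, ENNReal.ofReal (f (matGrad z x)) =
        ∫⁻ x in VA, ENNReal.ofReal (f (matGrad v x)) := by
      refine setLIntegral_congr_fun oA.measurableSet ?_
      intro x hx
      simp only [matGrad_congr (hzv x hx)]
    calc ∫⁻ x in Ω, ENNReal.ofReal (f (matGrad z x))
        ≤ ∫⁻ x in (VA ∪ VB) ∪ (Ω \ (VA ∪ VB)), ENNReal.ofReal (f (matGrad z x)) :=
          lintegral_mono_set hsub
      _ ≤ ((∫⁻ x in VA, ENNReal.ofReal (f (matGrad z x))) +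
          (∫⁻ x in VB, ENNReal.ofReal (f (matGrad z x)))) +
          ∫⁻ x in Ω \ (VA ∪ VB), ENNReal.ofReal (f (matGrad z x)) :=
          (lintegral_union_le _ _ _).trans (add_le_add (lintegral_union_le _ _ _) le_rfl)
      _ ≤ (ENNReal.ofReal (cA + ε) * volume VA + ENNReal.ofReal (cB + ε) * volume VB) + 0 := by
          rw [setLIntegral_measure_zero _ _ null, i1]
          gcongr
      _ = ENNReal.ofReal (lam * cA + (1 - lam) * cB + ε) * volume Ω := by
          rw [add_zero, vA, vB, ← mul_assoc, ← mul_assoc, ← ENNReal.ofReal_mul (by positivity),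
            ← ENNReal.ofReal_mul (by positivity), ← add_mul,
            ← ENNReal.ofReal_add (by positivity) (by positivity)]
          congr 2
          ring

theorem hi_mem {N n : ℕ} {U : Set (Mat N n)} {L : List (ℝ × Mat N n)} (h : HIProp U L) :
    ∀ p ∈ L, p.2 ∈ U := by
  induction h with
  | single l ξ hξ => simpa using hξ
  | pair l₁ l₂ ξ₁ ξ₂ h₁ h₂ hr => simp [h₁, h₂]
  | step L rest l₁ l₂ ξ₁ ξ₂ hperm hrest h₁ h₂ hr hrec ih =>
    intro p hp
    rw [hperm.mem_iff, List.mem_cons, List.mem_cons] at hp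
    rcases hp with rfl | rfl | hp
    · exact h₁
    · exact h₂
    · exact ih p (List.mem_cons_of_mem _ hp)

theorem hi_tprop {N n : ℕ} {U : Set (Mat N n)} (hU : IsOpen U) {M0 : ℝ} {M : NNReal}
    (hM : M0 + 1 ≤ M) (hM0 : ∀ ξ ∈ U, ∀ v, ‖ξ.mulVec v‖ ≤ M0 * ‖v‖) {f : Mat N n → ℝ}
    {L : List (ℝ × Mat N n)} (h : HIProp U L) :
    (∀ p ∈ L, 0 < p.1) → ∀ g : Mat N n → ℝ, (∀ ξ, 0 ≤ g ξ) → (∀ ξ ∈ U, TProp U M f ξ (g ξ)) →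
      TProp U M f ((L.map fun p => p.1).sum⁻¹ • (L.map fun p => p.1 • p.2).sum)
        ((L.map fun p => p.1).sum⁻¹ * (L.map fun p => p.1 * g p.2).sum) := by
  have pair : ∀ (l₁ l₂ : ℝ) (ξ₁ ξ₂ : Mat N n), 0 < l₁ → 0 < l₂ → ξ₁ ∈ U → ξ₂ ∈ U →
      (ξ₁ - ξ₂).rank = 1 → ∀ g : Mat N n → ℝ, (∀ ξ, 0 ≤ g ξ) → (∀ ξ ∈ U, TProp U M f ξ (g ξ)) →
      TProp U M f ((l₁ + l₂)⁻¹ • (l₁ • ξ₁ + l₂ • ξ₂)) ((l₁ + l₂)⁻¹ * (l₁ * g ξ₁ + l₂ * g ξ₂)) := by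
    intro l₁ l₂ ξ₁ ξ₂ p1 p2 h₁ h₂ hr g g0 gT
    have hm := tprop_mix hU hM hM0 h₁ h₂ hr (lam := l₁ / (l₁ + l₂)) (by positivity)
      (by rw [div_lt_one (by positivity)]; linarith) (g0 ξ₁) (g0 ξ₂) (gT ξ₁ h₁) (gT ξ₂ h₂)
    have e0 : 1 - l₁ / (l₁ + l₂) = (l₁ + l₂)⁻¹ * l₂ := by field_simp; ring
    have e1 : l₁ / (l₁ + l₂) = (l₁ + l₂)⁻¹ * l₁ := by field_simp
    rw [e0, e1] at hm
    rw [smul_add, smul_smul, smul_smul, mul_add, ← mul_assoc, ← mul_assoc]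
    exact hm
  induction h with
  | single l ξ hξ =>
    intro hpos g g0 gT
    have hl : 0 < l := hpos (l, ξ) (by simp)
    simp only [List.map_cons, List.map_nil, List.sum_cons, List.sum_nil, add_zero]
    rw [smul_smul, ← mul_assoc, inv_mul_cancel₀ hl.ne', one_smul, one_mul]
    exact gT ξ hξ
  | pair l₁ l₂ ξ₁ ξ₂ h₁ h₂ hr =>
    intro hpos g g0 gT
    simp only [List.map_cons, List.map_nil, List.sum_cons, List.sum_nil, add_zero]
    exact pair l₁ l₂ ξ₁ ξ₂ (hpos (l₁, ξ₁) (by simp)) (hpos (l₂, ξ₂) (by simp)) h₁ h₂ hr g g0 gT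
  | step L rest l₁ l₂ ξ₁ ξ₂ hperm hrest h₁ h₂ hr hrec ih =>
    intro hpos g g0 gT
    have hpos' : ∀ p ∈ (l₁, ξ₁) :: (l₂, ξ₂) :: rest, 0 < p.1 := fun p hp =>
      hpos p (hperm.mem_iff.2 hp)
    have p1 : 0 < l₁ := hpos' (l₁, ξ₁) (by simp)
    have p2 : 0 < l₂ := hpos' (l₂, ξ₂) (by simp)
    have hη := pair l₁ l₂ ξ₁ ξ₂ p1 p2 h₁ h₂ hr g g0 gT
    set η := (l₁ + l₂)⁻¹ • (l₁ • ξ₁ + l₂ • ξ₂) with hηd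
    set cη := (l₁ + l₂)⁻¹ * (l₁ * g ξ₁ + l₂ * g ξ₂) with hcη
    have cη0 : 0 ≤ cη := by
      have := g0 ξ₁
      have := g0 ξ₂
      positivity
    let g' : Mat N n → ℝ := fun ζ => if ζ = η then min (g ζ) cη else g ζ
    have g'le : ∀ ζ, g' ζ ≤ g ζ := by
      intro ζ
      simp only [g']
      split_ifs
      · exact min_le_left _ _
      · exact le_rfl
    have g'η : g' η ≤ cη := by
      simp only [g', if_true]
      exact min_le_right _ _
    have hI := ih (by
      intro p hp
      rw [List.mem_cons] at hp
      rcases hp with rfl | hp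
      · exact add_pos p1 p2
      · exact hpos' p (by simp [hp])) g' (by
      intro ζ
      simp only [g']
      split_ifs
      · exact le_min (g0 _) cη0
      · exact g0 _) (by
      intro ζ hζ
      simp only [g']
      split_ifs with hh
      · rcases min_choice (g ζ) cη with h | h
        · rw [h]; exact gT ζ hζ
        · rw [h, hh]; exact hη
      · exact gT ζ hζ)
    rw [(hperm.map _).sum_eq, (hperm.map _).sum_eq, (hperm.map _).sum_eq]
    simp only [List.map_cons, List.sum_cons] at hI ⊢
    have hs : 0 < l₁ + l₂ := by positivity
    have e1 : (l₁ + l₂) • η = l₁ • ξ₁ + l₂ • ξ₂ := by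
      rw [hηd, smul_smul, mul_inv_cancel₀ hs.ne', one_smul]
    have e2 : (l₁ + l₂) * cη = l₁ * g ξ₁ + l₂ * g ξ₂ := by
      rw [hcη, ← mul_assoc, mul_inv_cancel₀ hs.ne', one_mul]
    rw [e1, add_assoc (l₁ • ξ₁), add_assoc l₁] at hI
    refine hI.mono ?_
    have hrs : 0 ≤ (rest.map fun p => p.1).sum := by
      apply List.sum_nonneg
      intro x hx
      obtain ⟨p, hp, rfl⟩ := List.mem_map.1 hx
      exact (hpos' p (by simp [hp])).le
    have hrl : (rest.map fun p => p.1 * g' p.2).sum ≤ (rest.map fun p => p.1 * g p.2).sum := by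
      apply List.sum_le_sum
      intro p hp
      exact mul_le_mul_of_nonneg_left (g'le _) (hpos' p (by simp [hp])).le
    apply mul_le_mul_of_nonneg_left _ (by positivity)
    have := mul_le_mul_of_nonneg_left g'η hs.le
    linarith

theorem opbound {N n : ℕ} {K : Set (Mat N n)} (hK : Bornology.IsBounded K) :
    ∃ M0 : ℝ, 0 ≤ M0 ∧ ∀ ξ ∈ K, ∀ v : Fin n → ℝ, ‖ξ.mulVec v‖ ≤ M0 * ‖v‖ := by
  obtain ⟨R, hR0, hR⟩ := hK.exists_pos_norm_le
  refine ⟨n * R, by positivity, ?_⟩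
  intro ξ hξ v
  have hent : ∀ i j, ‖ξ i j‖ ≤ R := by
    intro i j
    refine le_trans ?_ (hR ξ hξ)
    rw [Matrix.frobenius_norm_def]
    have h1 : ‖ξ i j‖ ^ (2:ℝ) ≤ ∑ i, ∑ j, ‖ξ i j‖ ^ (2:ℝ) := by
      refine le_trans ?_ (Finset.single_le_sum (f := fun i => ∑ j, ‖ξ i j‖ ^ (2:ℝ))
        (fun i _ => Finset.sum_nonneg fun j _ => by positivity) (Finset.mem_univ i))
      exact Finset.single_le_sum (f := fun j => ‖ξ i j‖ ^ (2:ℝ))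
        (fun j _ => by positivity) (Finset.mem_univ j)
    have h2 := Real.rpow_le_rpow (by positivity) h1 (by norm_num : (0:ℝ) ≤ 1 / 2)
    rwa [← Real.rpow_mul (norm_nonneg _), show (2:ℝ) * (1 / 2) = 1 by norm_num,
      Real.rpow_one] at h2
  rw [pi_norm_le_iff_of_nonneg (by positivity)]
  intro i
  have h3 : (ξ.mulVec v) i = ∑ j, ξ i j * v j := rfl
  rw [h3]
  refine (norm_sum_le _ _).trans ?_
  calc ∑ j, ‖ξ i j * v j‖ ≤ ∑ _j : Fin n, R * ‖v‖ := by
        refine Finset.sum_le_sum fun j _ => ?_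
        rw [norm_mul]
        exact mul_le_mul (hent i j) (norm_le_pi_norm v j) (norm_nonneg _) hR0.le
    _ = n * R * ‖v‖ := by simp [mul_assoc]

theorem pwaff {N n : ℕ} {U : Set (Mat N n)} {M : NNReal} {u : (Fin n → ℝ) → Fin N → ℝ}
    (hu : LipschitzWith M u) {Ω : Set (Fin n → ℝ)} (hΩ : IsOpen Ω)
    (h : ∀ᵐ x ∂(volume.restrict Ω), LocAff U u x) : PiecewiseAffineOn u Ω := by
  refine ⟨hu.continuous.continuousOn, ?_⟩
  let ι := {p : Mat N n × (Fin N → ℝ) // p.1 ∈ U ∧ (Gset Ω u p).Nonempty}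
  have : Countable ι := Gset_countable hΩ u U
  obtain ⟨φ, hφ⟩ := exists_injective_nat ι
  refine ⟨fun k => ⋃ p : ι, ⋃ (_ : φ p = k), Gset Ω u p.1, ?_, ?_, ?_, ?_, ?_⟩
  · exact fun k => isOpen_iUnion fun p => isOpen_iUnion fun _ => Gset_open hΩ u p.1
  · exact fun k => iUnion_subset fun p => iUnion_subset fun _ => inter_subset_left
  · intro k l hkl
    rw [Set.disjoint_left]
    intro x hx hx'
    simp only [mem_iUnion] at hx hx'
    obtain ⟨p, hp, hxp⟩ := hx
    obtain ⟨q, hq, hxq⟩ := hx'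
    refine Set.disjoint_left.1 (Gset_disj Ω u p.1 q.1 ?_) hxp hxq
    intro hpq
    have : p = q := Subtype.ext hpq
    subst this
    exact hkl (hp.symm.trans hq)
  · rw [ae_restrict_iff' hΩ.measurableSet, ae_iff] at h
    refine measure_mono_null ?_ h
    rintro x ⟨hx, hx2⟩ hcon
    obtain ⟨A, hA, d, hd⟩ := hcon hx
    apply hx2
    have hx' : x ∈ Gset Ω u (A, d) := ⟨hx, hd⟩
    simp only [mem_iUnion]
    exact ⟨_, ⟨(A, d), hA, ⟨x, hx'⟩⟩, rfl, hx'⟩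
  · intro k
    by_cases hk : ∃ p, φ p = k
    · obtain ⟨p, hp⟩ := hk
      refine ⟨p.1.1, p.1.2, ?_⟩
      intro x hx
      simp only [mem_iUnion] at hx
      obtain ⟨q, hq, hxq⟩ := hx
      have : q = p := hφ (hq.trans hp.symm)
      subst this
      have hev : ∀ᶠ y in 𝓝 x, u y = q.1.1.mulVec y + q.1.2 := hxq.2
      exact hev.self_of_nhds
    · refine ⟨0, 0, ?_⟩
      intro x hx
      simp only [mem_iUnion] at hx
      obtain ⟨q, hq, _⟩ := hx
      exact absurd ⟨q, hq⟩ hk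

theorem infDist_bound {N n : ℕ} (E K : Set (Mat N n)) (hK : Bornology.IsBounded K) :
    ∃ D : ℝ, 0 ≤ D ∧ ∀ ξ ∈ K, Metric.infDist ξ E ≤ D := by
  rcases E.eq_empty_or_nonempty with rfl | ⟨e0, he0⟩
  · exact ⟨0, le_rfl, fun ξ _ => by simp⟩
  · obtain ⟨R, hR0, hR⟩ := hK.exists_pos_norm_le
    refine ⟨R + ‖e0‖, by positivity, fun ξ hξ => ?_⟩
    refine (Metric.infDist_le_dist_of_mem he0).trans ?_
    rw [dist_eq_norm]
    exact (norm_sub_le _ _).trans (by gcongr; exact hR ξ hξ)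

end Helpers

section Statements

open Metric Set

theorem stmt1 {N n : ℕ} (E K : Set (Mat N n))
    (hE : Bornology.IsBounded E) (hK : Bornology.IsBounded K)
    (Eδ Kδ : ℝ → Set (Mat N n))
    (h1 : ∀ ε > 0, ∃ δ₀ > 0, ∀ δ ∈ Set.Ioc (0:ℝ) δ₀, ∀ η ∈ Eδ δ, Metric.infDist η E ≤ ε)
    (h2 : ∀ η ∈ interior K, ∃ δ₀ > 0, ∀ δ ∈ Set.Ioc (0:ℝ) δ₀, η ∈ Kδ δ)
    (h3 : ∀ δ > 0, ∀ ξ ∈ Kδ δ, ∃ (I : ℕ) (l : Fin I → ℝ) (ξs : Fin I → Mat N n),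
      (∀ i, 0 < l i) ∧ ∑ i, l i = 1 ∧ SatisfiesH (interior K) I l ξs ∧
      ξ = ∑ i, l i • ξs i ∧
      ∑ i ∈ Finset.univ.filter (fun i => ξs i ∉ Eδ δ), l i < δ) :
    HasRelaxationProperty (interior K) E := by
  set U := interior K with hUd
  have hU : IsOpen U := isOpen_interior
  obtain ⟨M0, hM00, hM0⟩ := opbound hK
  have hM0U : ∀ ξ ∈ U, ∀ v, ‖ξ.mulVec v‖ ≤ M0 * ‖v‖ := fun ξ hξ => hM0 ξ (interior_subset hξ)
  obtain ⟨D, hD0, hD⟩ := infDist_bound E K hK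
  let M : NNReal := ⟨M0 + 1, by positivity⟩
  have hM : M0 + 1 ≤ (M : ℝ) := le_rfl
  let f : Mat N n → ℝ := fun ξ => Metric.infDist ξ E
  have hf : Continuous f := Metric.continuous_infDist_pt E
  have hMU : ∀ ξ ∈ U, ∀ v, ‖ξ.mulVec v‖ ≤ M * ‖v‖ := by
    intro ξ hξ v
    refine (hM0U ξ hξ v).trans ?_
    gcongr
    linarith
  have core : ∀ ξ ∈ U, ∀ ε > 0, TProp U M f ξ ε := by
    intro ξ hξ ε hε
    obtain ⟨δ1, hδ1, H1⟩ := h1 (ε / 2) (by positivity)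
    obtain ⟨δ2, hδ2, H2⟩ := h2 ξ hξ
    obtain ⟨δ, hδ, hδ1', hδ2', hδ3⟩ : ∃ δ : ℝ, 0 < δ ∧ δ ≤ δ1 ∧ δ ≤ δ2 ∧ D * δ ≤ ε / 2 := by
      refine ⟨min (min δ1 δ2) (ε / 2 / (D + 1)), by positivity,
        (min_le_left _ _).trans (min_le_left _ _), (min_le_left _ _).trans (min_le_right _ _), ?_⟩
      calc D * min (min δ1 δ2) (ε / 2 / (D + 1)) ≤ D * (ε / 2 / (D + 1)) := by
            gcongr; exact min_le_right _ _
        _ ≤ ε / 2 := by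
          rw [mul_div_assoc', div_le_iff₀ (by positivity)]
          nlinarith
    obtain ⟨I, l, ξs, hl, hl1, hH, hξs, hlt⟩ := h3 δ hδ ξ (H2 δ ⟨hδ, hδ2'⟩)
    have hmem : ∀ i, ξs i ∈ U := fun i => hi_mem hH (l i, ξs i) (by
      rw [List.mem_ofFn]; exact ⟨i, rfl⟩)
    have hT := hi_tprop hU hM hM0U (f := f) hH (by
      intro p hp
      rw [List.mem_ofFn] at hp
      obtain ⟨i, rfl⟩ := hp
      exact hl i) f (fun ξ => Metric.infDist_nonneg) (fun ξ hξ => tprop_base hU hf hξ hMU)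
    rw [List.map_ofFn, List.map_ofFn, List.map_ofFn, List.sum_ofFn, List.sum_ofFn,
      List.sum_ofFn] at hT
    simp only [Function.comp_apply] at hT
    rw [hl1, inv_one, one_smul, one_mul, ← hξs] at hT
    refine hT.mono ?_
    rw [← Finset.sum_filter_add_sum_filter_not Finset.univ (fun i => ξs i ∉ Eδ δ)]
    have b1 : ∑ i ∈ Finset.univ.filter (fun i => ξs i ∉ Eδ δ), l i * f (ξs i) ≤ ε / 2 := by
      calc _ ≤ ∑ i ∈ Finset.univ.filter (fun i => ξs i ∉ Eδ δ), l i * D := by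
            refine Finset.sum_le_sum fun i _ => ?_
            exact mul_le_mul_of_nonneg_left (hD _ (interior_subset (hmem i))) (hl i).le
        _ = (∑ i ∈ Finset.univ.filter (fun i => ξs i ∉ Eδ δ), l i) * D := by
            rw [Finset.sum_mul]
        _ ≤ δ * D := by gcongr
        _ ≤ ε / 2 := by linarith
    have b2 : ∑ i ∈ Finset.univ.filter (fun i => ¬ (ξs i ∉ Eδ δ)), l i * f (ξs i) ≤ ε / 2 := by
      calc _ ≤ ∑ i ∈ Finset.univ.filter (fun i => ¬ (ξs i ∉ Eδ δ)), l i * (ε / 2) := by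
            refine Finset.sum_le_sum fun i hi => ?_
            have hi' : ξs i ∈ Eδ δ := not_not.1 (Finset.mem_filter.1 hi).2
            exact mul_le_mul_of_nonneg_left (H1 δ ⟨hδ, hδ1'⟩ _ hi') (hl i).le
        _ ≤ ∑ i, l i * (ε / 2) := by
            refine Finset.sum_le_sum_of_subset_of_nonneg (Finset.filter_subset _ _) fun i _ _ => ?_
            have := hl i
            positivity
        _ = ε / 2 := by rw [← Finset.sum_mul, hl1, one_mul]
    linarith
  intro Ω hΩ hΩb ξ hξ b
  have hseq : ∀ ν : ℕ, ∃ u : (Fin n → ℝ) → Fin N → ℝ, LipschitzWith M u ∧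
      (∀ x, x ∉ Ω → u x = ξ.mulVec x + b) ∧ (∀ x, ‖u x - (ξ.mulVec x + b)‖ ≤ 1 / ((ν : ℝ) + 1)) ∧
      (∀ᵐ x ∂(volume.restrict Ω), LocAff U u x) ∧
      ∫⁻ x in Ω, ENNReal.ofReal (f (matGrad u x)) ≤
        ENNReal.ofReal (1 / ((ν : ℝ) + 1) + 1 / ((ν : ℝ) + 1)) * volume Ω := by
    intro ν
    have hp : 0 < 1 / ((ν : ℝ) + 1) := by positivity
    exact (core ξ hξ _ hp _ hp).self_of_nhds _ hp Ω hΩ b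
  choose u u1 u2 u3 u4 u5 using hseq
  have hlim : Tendsto (fun ν : ℕ => 1 / ((ν : ℝ) + 1)) atTop (nhds 0) :=
    tendsto_one_div_add_atTop_nhds_zero_nat
  refine ⟨u, fun ν => pwaff (u1 ν) hΩ (u4 ν), fun ν => ⟨⟨M, (u1 ν).lipschitzOnWith⟩, ?_⟩, ?_,
    ⟨M, fun ν => (u1 ν).lipschitzOnWith⟩, ?_, ?_⟩
  · intro x hx
    rw [hΩ.frontier_eq] at hx
    exact u2 ν x hx.2
  · intro ν
    filter_upwards [u4 ν] with x hx
    obtain ⟨A, hA, d, hd⟩ := hx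
    rw [matGrad_of_ev hd]
    exact Or.inr hA
  · rw [Metric.tendstoUniformlyOn_iff]
    intro ε hε
    filter_upwards [hlim.eventually (gt_mem_nhds hε)] with ν hν x _
    rw [dist_comm, dist_eq_norm]
    exact (u3 ν x).trans_lt hν
  · have hfin : volume Ω ≠ ⊤ := hΩb.measure_lt_top.ne
    refine squeeze_zero (g := fun ν : ℕ =>
      (1 / ((ν : ℝ) + 1) + 1 / ((ν : ℝ) + 1)) * (volume Ω).toReal) ?_ ?_ ?_
    · intro ν
      exact integral_nonneg fun x => Metric.infDist_nonneg
    · intro ν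
      refine (le_abs_self _).trans ?_
      rw [← Real.norm_eq_abs]
      refine (norm_integral_le_lintegral_norm _).trans ?_
      have hp : 0 ≤ 1 / ((ν : ℝ) + 1) + 1 / ((ν : ℝ) + 1) := by positivity
      have : (1 / ((ν : ℝ) + 1) + 1 / ((ν : ℝ) + 1)) * (volume Ω).toReal =
          (ENNReal.ofReal (1 / ((ν : ℝ) + 1) + 1 / ((ν : ℝ) + 1)) * volume Ω).toReal := by
        rw [ENNReal.toReal_mul, ENNReal.toReal_ofReal hp]
      rw [this]
      apply ENNReal.toReal_mono (ENNReal.mul_ne_top ENNReal.ofReal_ne_top hfin)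
      refine le_trans (le_of_eq ?_) (u5 ν)
      refine lintegral_congr fun x => ?_
      rw [Real.norm_eq_abs, abs_of_nonneg Metric.infDist_nonneg]
    · have := (hlim.add hlim).mul_const (volume Ω).toReal
      simpa using this

end Statements
end
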